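/- For a sentence I of size n, the colored fundamental function expands into the colored dual immaculate basis as F_I = Σ_K L^{-1}_{I,K} 𝔖*_K, where the sum runs over all sentences K reachable from I in the colored immaculate descent graph 𝔇_A^n, and L^{-1}_{I,K} = Σ_𝒫 (−1)^{ℓ(𝒫)} prod(𝒫), the sum running over all directed paths 𝒫 from I to K in 𝔇_A^n. -/

import Mathlib

open scoped BigOperators

namespace ColoredImm

variable {A : Type*}

/-- A *weak sentence* over the alphabet `A`: a finite list of words (words may be empty). -/
abbrev Sentence (A : Type*) := List (List A)

/-- A genuine *sentence*: all of its words are nonempty. -/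
def IsSentence (I : Sentence A) : Prop := ∀ w ∈ I, w ≠ []

/-- The size `|I|` of a sentence: its total number of letters. -/
def size (I : Sentence A) : ℕ := (I.map List.length).sum

/-- The word lengths `wℓ(I)` of a sentence. -/
def wl (I : Sentence A) : List ℕ := I.map List.length

/-- The flattening of a weak sentence: delete all empty words. -/
def flattenWS (I : Sentence A) : Sentence A := I.filter (fun w => !w.isEmpty)

/-- `Refines J I` means `J ⪯ I`: the sentence `I` can be obtained by concatenating
some adjacent words of `J` (so `J` is a refinement of `I`, and `I` a coarsening of `J`). -/
def Refines (J I : Sentence A) : Prop :=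
  ∃ P : List (Sentence A), (∀ p ∈ P, p ≠ []) ∧ P.flatten = J ∧ P.map List.flatten = I

/-! ### Fillings and colored immaculate tableaux -/

/-- An integer filling of a diagram, recorded row by row. -/
abbrev Filling := List (List ℕ)

/-- The entry of a filling at box `b = (row, column)` (0-indexed), with default `0`. -/
def entryAt (f : Filling) (b : ℕ × ℕ) : ℕ := (f.getD b.1 []).getD b.2 0

/-- `IsCIT I f`: `f` is a colored immaculate tableau of shape `I`; that is, `f` has the
same shape as the colored composition diagram of `I`, its entries are positive integers
weakly increasing left to right along each row, and the entries in the first column are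
strictly increasing from top to bottom. -/
def IsCIT (I : Sentence A) (f : Filling) : Prop :=
  f.map List.length = I.map List.length ∧
  (∀ row ∈ f, row.Chain' (· ≤ ·)) ∧
  (f.filterMap List.head?).Chain' (· < ·) ∧
  (∀ x ∈ f.flatten, 1 ≤ x)

/-- The colors (letters of `w`) of the boxes of one row whose entry (in `row`) is `v`,
read from left to right. -/
def rowWith (w : List A) (row : List ℕ) (v : ℕ) : List A :=
  ((w.zip row).filter (fun p => p.2 == v)).map Prod.fst

/-- The word of the type of a tableau at value `v`: the colors of all boxes with entry `v`,
read left to right, from the bottom row up to the top row. -/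
def typeWord (I : Sentence A) (f : Filling) (v : ℕ) : List A :=
  (((I.zip f).reverse).map (fun p => rowWith p.1 p.2 v)).flatten

/-- `HasType I f B` : the tableau `f` (of shape `I`) has type the weak sentence `B`,
i.e. for every positive integer `v`, the colors of the boxes of `f` containing `v`
(read left to right, bottom to top) form the `v`-th word of `B`. -/
def HasType (I : Sentence A) (f : Filling) (B : Sentence A) : Prop :=
  ∀ v, 1 ≤ v → typeWord I f v = B.getD (v - 1) []

/-- `K_{J,B}`: the number of colored immaculate tableaux of shape `J` and type `B`. -/
noncomputable def KJB (J B : Sentence A) : ℕ :=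
  Set.ncard {f : Filling | IsCIT J f ∧ HasType J f B}

/-! ### Standardization -/

/-- The list of boxes of a filling. -/
def boxes (f : Filling) : List (ℕ × ℕ) :=
  ((List.range f.length).map
    (fun r => (List.range (f.getD r []).length).map (fun j => (r, j)))).flatten

/-- `beforeB f b b'`: box `b` comes strictly before box `b'` in the type-reading order of `f`
(smaller entries first; among equal entries, lower rows first, and within a row left to right). -/
def beforeB (f : Filling) (b b' : ℕ × ℕ) : Bool :=
  entryAt f b < entryAt f b' ||
    (entryAt f b == entryAt f b' && (b'.1 < b.1 || (b.1 == b'.1 && b.2 < b'.2)))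

/-- The standardization of a filling: each box is renumbered (starting from `1`)
according to its position in the type-reading order. -/
def stdFill (f : Filling) : Filling :=
  (List.range f.length).map (fun r =>
    (List.range (f.getD r []).length).map (fun j =>
      1 + ((boxes f).filter (fun b' => beforeB f b' (r, j))).length))

/-- The number of boxes of a filling. -/
def nBoxes (f : Filling) : ℕ := f.flatten.length

/-- A filling of `n` boxes is standard when its entries are exactly `1, …, n`,
each appearing once. -/
def IsStandardF (f : Filling) : Prop := f.flatten.Perm (List.range' 1 (nBoxes f))

/-! ### Descents and the colored descent composition -/

/-- The (0-indexed) row containing the value `v` in a standard filling. -/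
def rowOf (f : Filling) (v : ℕ) : ℕ := f.findIdx (fun row => row.contains v)

/-- The sorted list of descents of a standard filling: those `i` with `1 ≤ i ≤ n-1`
such that `i+1` lies in a strictly lower row than `i`. -/
def descList (f : Filling) : List ℕ :=
  (List.range' 1 (nBoxes f - 1)).filter (fun i => decide (rowOf f i < rowOf f (i + 1)))

/-- The composition of `n` associated to a set of split positions `d_1 < … < d_k`:
`(d_1, d_2 - d_1, …, n - d_k)`. -/
def compOf (ds : List ℕ) (n : ℕ) : List ℕ :=
  List.zipWith (fun a b => b - a) (0 :: ds) (ds ++ [n])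

/-- Split a word into a sentence according to a composition. -/
def splitByComp : List A → List ℕ → List (List A)
  | _, [] => []
  | w, a :: rest => w.take a :: splitByComp (w.drop a) rest

/-- The color of the box containing the value `v` in a standard filling of shape `I`. -/
def colorOf [Inhabited A] (I : Sentence A) (f : Filling) (v : ℕ) : A :=
  (I.getD (rowOf f v) []).getD ((f.getD (rowOf f v) []).findIdx (fun x => x == v)) default

/-- The maximal word of the colored descent composition of a standard filling of shape `I`:
the colors of its boxes read in the order of their integer entries. -/
def readWord [Inhabited A] (I : Sentence A) (f : Filling) : List A :=
  (List.range (nBoxes f)).map (fun i => colorOf I f (i + 1))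

/-- The colored descent composition `co_A(U)` of a standard colored immaculate tableau:
read the colors of the boxes in the order of their entries, starting a new word
immediately after each descent. -/
def coA [Inhabited A] (I : Sentence A) (f : Filling) : Sentence A :=
  if nBoxes f = 0 then [] else splitByComp (readWord I f) (compOf (descList f) (nBoxes f))

/-- `L_{J,C}`: the number of standard colored immaculate tableaux of shape `J`
with colored descent composition `C`. -/
noncomputable def LJC [Inhabited A] (J C : Sentence A) : ℕ :=
  Set.ncard {f : Filling | IsCIT J f ∧ IsStandardF f ∧ coA J f = C}

/-! ### The colored quasisymmetric functions `QSym_A` -/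

/-- A (normal form of a) monomial in the partially commutative variables `x_{a,i}`:
a pair consisting of the list of words `(w_1, …, w_m)` and the list of (strictly
increasing, positive) second indices `(j_1 < … < j_m)`, representing
`x_{w_1,j_1} ⋯ x_{w_m,j_m}`. -/
abbrev Mono (A : Type*) := List (List A) × List ℕ

/-- A colored quasisymmetric "series": a formal linear combination of monomials,
recorded by its coefficient function.  `QSym_A` itself is the span of the colored
monomial functions `MQ I` inside this space. -/
abbrev QSymA (A : Type*) := Mono A → ℚ

/-- Validity of a monomial normal form: words and indices match up, the indices are
strictly increasing positive integers, and all words are nonempty. -/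
def ValidMono (m : Mono A) : Prop :=
  m.1.length = m.2.length ∧ m.2.Chain' (· < ·) ∧ (∀ j ∈ m.2, 1 ≤ j) ∧ ∀ w ∈ m.1, w ≠ []

open Classical in
/-- The colored monomial quasisymmetric function `M_I`: the sum of all monomials
`x_{w_1,j_1} ⋯ x_{w_m,j_m}` with `j_1 < … < j_m`, where `I = (w_1, …, w_m)`. -/
noncomputable def MQ (I : Sentence A) : QSymA A := fun m =>
  if m.1 = I ∧ ValidMono m then 1 else 0

/-- The largest entry of a filling. -/
def maxEntry (f : Filling) : ℕ := f.flatten.foldr max 0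

/-- The monomial `x_T` of a colored immaculate tableau `T = f` of shape `I`:
for `T` of type `B = (u_1, …, u_j)` it is `x_{u_1,1} x_{u_2,2} ⋯ x_{u_j,j}`
(empty words are skipped). -/
def monoOf (I : Sentence A) (f : Filling) : Mono A :=
  let vs := ((List.range (maxEntry f)).map (· + 1)).filter (fun v => !(typeWord I f v).isEmpty)
  (vs.map (typeWord I f), vs)

/-- The colored dual immaculate function `𝔖*_J = Σ_T x_T`, the sum of the monomials of all
colored immaculate tableaux `T` of shape `J` (its coefficient at a monomial `m` is the
number of such tableaux with `x_T = m`). -/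
noncomputable def dualImm (J : Sentence A) : QSymA A := fun m =>
  (Set.ncard {f : Filling | IsCIT J f ∧ monoOf J f = m} : ℚ)

/-- The colored fundamental quasisymmetric function `F_I = Σ_{J ⪯ I} M_J`. -/
noncomputable def FQ (I : Sentence A) : QSymA A :=
  ∑ᶠ J ∈ {J : Sentence A | Refines J I}, MQ J

/-! ### The colored immaculate descent graph -/

/-- Edges of the colored immaculate descent graph: a directed edge from `I` to `J` (`J ≠ I`)
whenever some standard colored immaculate tableau of shape `I` has colored descent
composition `J`. -/
def IsEdge [Inhabited A] (I J : Sentence A) : Prop := J ≠ I ∧ LJC I J ≠ 0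

/-- Directed paths from `I` to `K` in the colored immaculate descent graph, recorded by
their (nonempty) lists of successive vertices; the path `[I]` is the empty path at `I`. -/
def PathsFromTo [Inhabited A] (I K : Sentence A) : Set (List (Sentence A)) :=
  {p | p.head? = some I ∧ p.getLast? = some K ∧ p.Chain' IsEdge}

/-- The signed weight `(-1)^{ℓ(𝒫)} prod(𝒫)` of a directed path `𝒫`:
`ℓ(𝒫)` is its number of edges and `prod(𝒫)` the product of its edge weights `L_{I,J}`. -/
noncomputable def pathWeight [Inhabited A] (p : List (Sentence A)) : ℚ :=
  ((-1 : ℚ)) ^ (p.length - 1) * ((p.zip p.tail).map (fun e => (LJC e.1 e.2 : ℚ))).prod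

/-- `L⁻¹_{I,K} = Σ_𝒫 (-1)^{ℓ(𝒫)} prod(𝒫)`, summed over all directed paths `𝒫`
from `I` to `K` in the colored immaculate descent graph. -/
noncomputable def Linv [Inhabited A] (I K : Sentence A) : ℚ :=
  ∑ᶠ p ∈ PathsFromTo I K, pathWeight p

/-! ### The colored noncommutative symmetric functions `NSym_A` -/

/-- A formal series over the complete homogeneous basis `{H_I}` of `NSym_A`, recorded by its
coefficient function on (weak) sentences.  `NSym_A` itself consists of the finitely
supported elements supported on genuine sentences; see `InNSym`. -/
abbrev NSymA (A : Type*) := Sentence A → ℚ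

/-- Membership in `NSym_A` proper: finitely supported, and supported on genuine sentences. -/
def InNSym (f : NSymA A) : Prop :=
  (Function.support f).Finite ∧ ∀ I, f I ≠ 0 → IsSentence I

open Classical in
/-- The colored complete homogeneous noncommutative symmetric function
`H_I = H_{w_1} ⋯ H_{w_k}`. -/
noncomputable def Hd (I : Sentence A) : NSymA A := fun J => if J = I then 1 else 0

/-- `H_w` for a single word `w`, with `H_∅ = 1`. -/
noncomputable def Hw (w : List A) : NSymA A := if w.isEmpty then Hd [] else Hd [w]

/-- Multiplication in `NSym_A` (the concatenation product, extended to series):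
`H_I · H_J = H_{I ⬝ J}`. -/
def mulN (f g : NSymA A) : NSymA A := fun I =>
  ∑ j ∈ Finset.range (I.length + 1), f (I.take j) * g (I.drop j)

/-- The duality pairing `⟨·,·⟩ : NSym_A × QSym_A → ℚ`, determined by
`⟨H_I, M_J⟩ = δ_{I,J}`: the `M_I`-coefficient of a quasisymmetric function is its
coefficient on the monomial `x_{w_1,1} x_{w_2,2} ⋯ x_{w_k,k}`. -/
noncomputable def pairNQ (G : NSymA A) (F : QSymA A) : ℚ :=
  ∑ᶠ I ∈ {I : Sentence A | IsSentence I}, G I * F (I, List.range' 1 I.length)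

/-- All ways of splitting each word of a list of words into a prefix and a suffix. -/
def splitsOf : List (List A) → List (List (List A) × List (List A))
  | [] => [([], [])]
  | w :: ws =>
      (((splitsOf ws).map (fun p =>
        (List.range (w.length + 1)).map (fun t => (w.take t :: p.1, w.drop t :: p.2))))).flatten

/-- Restriction of a candidate monomial: keep only the nonempty words together with
their indices. -/
def restrictMono (ws : List (List A)) (js : List ℕ) : Mono A :=
  let ps := (ws.zip js).filter (fun p => !p.1.isEmpty)
  (ps.map Prod.fst, ps.map Prod.snd)

/-- The product of colored quasisymmetric series: the coefficient of a monomial in `F·G`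
is the sum, over all ways of writing each of its words as a concatenation of a word of a
monomial of `F` (on the left) and a word of a monomial of `G` (on the right), of the
products of the corresponding coefficients. -/
def mulQ (F G : QSymA A) : QSymA A := fun m =>
  ((splitsOf m.1).map (fun p => F (restrictMono p.1 m.2) * G (restrictMono p.2 m.2))).sum

/-- The right perp operator `M^⊸` of `M ∈ QSym_A`, the linear operator on `NSym_A`
determined by `⟨M^⊸(H), G⟩ = ⟨H, G·M⟩`; explicitly, for the dual bases `{M_I}` and `{H_I}`,
`M^⊸(H) = Σ_I ⟨H, M_I · M⟩ H_I`. -/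
noncomputable def rperp (M : QSymA A) (H : NSymA A) : NSymA A :=
  ∑ᶠ I ∈ {I : Sentence A | IsSentence I}, pairNQ H (mulQ (MQ I) M) • Hd I

/-- The colored noncommutative Bernstein operator
`𝔹_v = Σ_u Σ_{Q : w(Q^r) = u} (-1)^{ℓ(Q)} H_{v·u} · (Σ_{S ⪰ Q} M_S^⊸)`,
where `Q` runs over all sentences, `u = w(Q^r)` is the concatenation of the words of `Q`
in reverse order, and `S` runs over all coarsenings of `Q`. -/
noncomputable def Bern (v : List A) (f : NSymA A) : NSymA A :=
  ∑ᶠ Q ∈ {Q : Sentence A | IsSentence Q},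
    ((-1 : ℚ)) ^ Q.length •
      mulN (Hw (v ++ Q.reverse.flatten))
        (∑ᶠ S ∈ {S : Sentence A | Refines Q S}, rperp (MQ S) f)

/-- The colored immaculate function `𝔖_J = 𝔹_{v_1} 𝔹_{v_2} ⋯ 𝔹_{v_h}(1)`. -/
noncomputable def ImmS (J : Sentence A) : NSymA A := J.foldr Bern (Hd [])

/-- The colored ribbon function `R_I = Σ_{J ⪰ I} (-1)^{ℓ(J) - ℓ(I)} H_J`. -/
noncomputable def Rib (I : Sentence A) : NSymA A :=
  ∑ᶠ J ∈ {J : Sentence A | Refines I J}, ((-1 : ℚ)) ^ (I.length - J.length) • Hd J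

/-- The Pieri relation `J ⊂_w K` for a sentence `J = (v_1, …, v_h)` and a word `w`:
`K = (u_1, …, u_g)` with `h ≤ g ≤ h+1` (setting `v_{h+1} = ∅`) and `u_j = v_j · q_j`
for words `q_j` (possibly empty) whose reversed concatenation `q_g ⋯ q_1` equals `w`. -/
def PieriRel (J : Sentence A) (w : List A) (K : Sentence A) : Prop :=
  J.length ≤ K.length ∧ K.length ≤ J.length + 1 ∧
  ∃ q : List (List A), q.length = K.length ∧ q.reverse.flatten = w ∧
    ∀ j < K.length, K.getD j [] = J.getD j [] ++ q.getD j []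

/-- Right containment of a weak sentence `K` in `J`: same length, and each word of `K` is a
suffix of the corresponding word of `J`. -/
def RightContained (K J : Sentence A) : Prop :=
  K.length = J.length ∧ ∀ i < J.length, (K.getD i []).IsSuffix (J.getD i [])

/-- The weak sentence `J/_R K`: remove each word of `K` from the right end of the
corresponding word of `J`. -/
def rightQuot (J K : Sentence A) : Sentence A :=
  List.zipWith (fun v u => v.take (v.length - u.length)) J K

/-- Left containment `J ⊆_L I`: `ℓ(J) ≤ ℓ(I)` and each word of `J` is a prefix of the
corresponding word of `I`. -/
def LeftContained (J I : Sentence A) : Prop :=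
  J.length ≤ I.length ∧ ∀ i < J.length, (J.getD i []).IsPrefix (I.getD i [])

/-- A skew colored immaculate tableau of shape `I/J`: a filling of the active boxes
(the `i`-th row keeps the last `|w_i| - |v_i|` boxes) with positive integers, rows weakly
increasing left to right, and the entries in the (active part of the) first column of `I`
strictly increasing top to bottom. -/
def IsSkewCIT (I J : Sentence A) (f : Filling) : Prop :=
  f.map List.length =
    (List.range I.length).map (fun i => (I.getD i []).length - (J.getD i []).length) ∧
  (∀ row ∈ f, row.Chain' (· ≤ ·)) ∧
  ((List.range I.length).filterMap
    (fun i => if (J.getD i []).length = 0 then (f.getD i []).head? else none)).Chain' (· < ·) ∧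
  (∀ x ∈ f.flatten, 1 ≤ x)

/-- The word of the type of a skew tableau at value `v`: the colors of the active boxes with
entry `v`, read left to right, bottom to top. -/
def skewTypeWord (I J : Sentence A) (f : Filling) (v : ℕ) : List A :=
  (((List.range I.length).reverse).map (fun i =>
    rowWith ((I.getD i []).drop (J.getD i []).length) (f.getD i []) v)).flatten

/-- `SkewHasType I J f K` : the skew tableau `f` of shape `I/J` has type `K`. -/
def SkewHasType (I J : Sentence A) (f : Filling) (K : Sentence A) : Prop :=
  ∀ v, 1 ≤ v → skewTypeWord I J f v = K.getD (v - 1) []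

/-! ### The complement involution `ψ` and the row-strict functions -/

/-- The complement `I^c` of a sentence: the unique sentence with the same maximal word
that splits exactly where `I` does not. -/
def complSent (I : Sentence A) : Sentence A :=
  let w := I.flatten
  let n := w.length
  if n = 0 then []
  else
    let splits := (((wl I).scanl (· + ·) 0).drop 1).dropLast
    let csplits := (List.range' 1 (n - 1)).filter (fun i => !(splits.contains i))
    splitByComp w (compOf csplits n)

/-- The `M_I`-coefficient of a colored quasisymmetric function. -/
noncomputable def coeffM (G : QSymA A) (I : Sentence A) : ℚ := G (I, List.range' 1 I.length)

/-- The image of `M_I` under `ψ`, via `M_I = Σ_{J ⪯ I} (-1)^{ℓ(J)-ℓ(I)} F_J` and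
`ψ(F_J) = F_{J^c}`. -/
noncomputable def psiM (I : Sentence A) : QSymA A :=
  ∑ᶠ J ∈ {J : Sentence A | Refines J I}, ((-1 : ℚ)) ^ (J.length - I.length) • FQ (complSent J)

/-- The linear involution `ψ` of `QSym_A`, determined by `ψ(F_I) = F_{I^c}`. -/
noncomputable def psiQ (G : QSymA A) : QSymA A :=
  ∑ᶠ I ∈ {I : Sentence A | IsSentence I}, coeffM G I • psiM I

/-- A colored row-strict immaculate tableau of shape `I`: entries strictly increase left to
right along each row and weakly increase top to bottom down the first column. -/
def IsCRSIT (I : Sentence A) (f : Filling) : Prop :=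
  f.map List.length = I.map List.length ∧
  (∀ row ∈ f, row.Chain' (· < ·)) ∧
  (f.filterMap List.head?).Chain' (· ≤ ·) ∧
  (∀ x ∈ f.flatten, 1 ≤ x)

/-- The word of the type of a row-strict tableau at value `v`: the colors of the boxes with
entry `v`, read left to right, top to bottom. -/
def rsTypeWord (I : Sentence A) (f : Filling) (v : ℕ) : List A :=
  ((I.zip f).map (fun p => rowWith p.1 p.2 v)).flatten

/-- The monomial `x_T` of a colored row-strict immaculate tableau. -/
def rsMonoOf (I : Sentence A) (f : Filling) : Mono A :=
  let vs := ((List.range (maxEntry f)).map (· + 1)).filter (fun v => !(rsTypeWord I f v).isEmpty)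
  (vs.map (rsTypeWord I f), vs)

/-- The colored row-strict dual immaculate function `ℛ𝔖*_J = Σ_T x_T`, summed over all
colored row-strict immaculate tableaux `T` of shape `J`. -/
noncomputable def rsDualImm (J : Sentence A) : QSymA A := fun m =>
  (Set.ncard {f : Filling | IsCRSIT J f ∧ rsMonoOf J f = m} : ℚ)

/-- `α ⪰ β` in the reverse lexicographic order on compositions: at the first index where
they differ, `α` has the *smaller* entry (padding with zeros). -/
def RevLexGE (α β : List ℕ) : Prop :=
  α = β ∨ ∃ i, (∀ j < i, α.getD j 0 = β.getD j 0) ∧ α.getD i 0 < β.getD i 0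

/-! ### Uncolored (ordinary) versions, for `QSym` -/

namespace Uncolored

/-- A composition: a list of positive integers. -/
def IsComposition (α : List ℕ) : Prop := ∀ a ∈ α, 1 ≤ a

/-- `β ⪯ α`: the composition `α` is obtained by summing adjacent parts of `β`. -/
def RefinesC (β α : List ℕ) : Prop :=
  ∃ P : List (List ℕ), (∀ p ∈ P, p ≠ []) ∧ P.flatten = β ∧ P.map List.sum = α

/-- A monomial `x_{i_1}^{a_1} ⋯ x_{i_m}^{a_m}` recorded by its exponents and its
strictly increasing positive indices. -/
abbrev MonoU := List ℕ × List ℕ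

/-- A quasisymmetric "series", recorded by its coefficient function on monomials.
`QSym` is the span of the monomial functions `MU α` inside this space. -/
abbrev QSymU := MonoU → ℚ

/-- Validity of a monomial: matching lengths, strictly increasing positive indices,
positive exponents. -/
def ValidMonoU (m : MonoU) : Prop :=
  m.1.length = m.2.length ∧ m.2.Chain' (· < ·) ∧ (∀ j ∈ m.2, 1 ≤ j) ∧ ∀ a ∈ m.1, 1 ≤ a

open Classical in
/-- The monomial quasisymmetric function `M_α`. -/
noncomputable def MU (α : List ℕ) : QSymU := fun m =>
  if m.1 = α ∧ ValidMonoU m then 1 else 0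

/-- The fundamental quasisymmetric function `F_α = Σ_{β ⪯ α} M_β`. -/
noncomputable def FU (α : List ℕ) : QSymU :=
  ∑ᶠ β ∈ {β : List ℕ | RefinesC β α}, MU β

/-- An immaculate tableau of shape `α`: positive integer entries, rows weakly increasing
left to right, first column strictly increasing top to bottom. -/
def IsIT (α : List ℕ) (f : Filling) : Prop :=
  f.map List.length = α ∧
  (∀ row ∈ f, row.Chain' (· ≤ ·)) ∧
  (f.filterMap List.head?).Chain' (· < ·) ∧
  (∀ x ∈ f.flatten, 1 ≤ x)

/-- The number of boxes of `f` with entry `v`. -/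
def countOf (f : Filling) (v : ℕ) : ℕ := (f.flatten.filter (fun x => x == v)).length

/-- The monomial `x^T` of an immaculate tableau `T` of type `β`:
`x_1^{β_1} ⋯ x_h^{β_h}` (zero exponents skipped). -/
def monoOfU (f : Filling) : MonoU :=
  let vs := ((List.range (maxEntry f)).map (· + 1)).filter (fun v => decide (countOf f v ≠ 0))
  (vs.map (countOf f), vs)

/-- The dual immaculate function `𝔖*_α = Σ_T x^T`, summed over all immaculate tableaux
of shape `α`. -/
noncomputable def dualImmU (α : List ℕ) : QSymU := fun m =>
  (Set.ncard {f : Filling | IsIT α f ∧ monoOfU f = m} : ℚ)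

/-- The descent composition `co(U)` of a standard immaculate tableau. -/
def descComp (f : Filling) : List ℕ :=
  if nBoxes f = 0 then [] else compOf (descList f) (nBoxes f)

/-- `L_{α,β}`: the number of standard immaculate tableaux of shape `α` with descent
composition `β`. -/
noncomputable def LU (α β : List ℕ) : ℕ :=
  Set.ncard {f : Filling | IsIT α f ∧ IsStandardF f ∧ descComp f = β}

/-- Edges of the immaculate descent graph `𝔇^n`. -/
def IsEdgeU (α β : List ℕ) : Prop := β ≠ α ∧ LU α β ≠ 0

/-- Directed paths from `α` to `β` in the immaculate descent graph, recorded by their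
lists of successive vertices; `[α]` is the empty path at `α`. -/
def PathsU (α β : List ℕ) : Set (List (List ℕ)) :=
  {p | p.head? = some α ∧ p.getLast? = some β ∧ p.Chain' IsEdgeU}

/-- The signed weight `(-1)^{ℓ(𝒫)} prod(𝒫)` of a path. -/
noncomputable def pathWeightU (p : List (List ℕ)) : ℚ :=
  ((-1 : ℚ)) ^ (p.length - 1) * ((p.zip p.tail).map (fun e => (LU e.1 e.2 : ℚ))).prod

/-- `L⁻¹_{α,β} = Σ_𝒫 (-1)^{ℓ(𝒫)} prod(𝒫)`, over directed paths from `α` to `β` in `𝔇^n`. -/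
noncomputable def LinvU (α β : List ℕ) : ℚ :=
  ∑ᶠ p ∈ PathsU α β, pathWeightU p

end Uncolored

end ColoredImm

/-!
A tableau is determined by its boxes, each recorded as (row, color, value), read in type order: by
increasing value, and from the bottom row to the top within a value. Forgetting the values leaves a
word of (row, color) pairs, which is the same thing as a standard tableau, and the values that can
be put back are those whose monomial refines the descent sentence of that word. Hence
`𝔖*_I = ∑ L_{I,K} F_K`, the sum being over all sentences `K`.

The weight of a sentence, which is the sum over its letters of the index of their word, strictly
increases along the edges of the descent graph, and `L_{I,I} = 1`. So the paths from `I` are finite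
in number, and solving `F_I = 𝔖*_I - ∑ L_{I,K} F_K`, summed over the edges `I → K`, recursively
gives the signed sum over paths.
-/

namespace ColoredImm

section SortedLists

variable {α κ : Type*} [LinearOrder κ] {key : α → κ} {l l' : List α}

theorem eq_of_pairwise_key_le (hl : l.Pairwise (key · ≤ key ·)) (hl' : l'.Pairwise (key · ≤ key ·))
    (h : ∀ k, l.filter (key · = k) = l'.filter (key · = k)) : l = l' := by
  induction l generalizing l' with
  | nil =>
    symm
    simpa [List.eq_nil_iff_forall_not_mem] using h
  | cons a l ih =>
    have mem_iff : ∀ b, b ∈ a :: l ↔ b ∈ l' := fun b => by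
      simpa using congrArg (b ∈ ·) (h (key b))
    rcases l' with _ | ⟨b, l'⟩
    · simpa using mem_iff a
    · rw [List.pairwise_cons] at hl hl'
      have hkey : key a = key b := by
        apply le_antisymm
        · rcases List.mem_cons.1 ((mem_iff b).2 (by simp)) with rfl | hb
          exacts [le_rfl, hl.1 b hb]
        · rcases List.mem_cons.1 ((mem_iff a).1 (by simp)) with rfl | ha
          exacts [le_rfl, hl'.1 a ha]
      obtain rfl : a = b := by
        simpa [hkey] using congrArg List.head? (h (key b))
      refine congrArg (a :: ·) (ih hl.2 hl'.2 fun k => ?_)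
      have := h k
      by_cases hk : key a = k <;> simpa [hk] using this

theorem flatMap_filter_key_eq {ks : List κ} (hks : ks.Pairwise (· < ·))
    (hl : l.Pairwise (key · ≤ key ·)) (hmem : ∀ a ∈ l, key a ∈ ks) :
    ks.flatMap (fun k => l.filter (key · = k)) = l := by
  refine eq_of_pairwise_key_le (key := key) ?_ hl fun k => ?_
  · refine List.pairwise_flatMap.2 ⟨fun k _ => hl.filter _, hks.imp fun hlt x hx y hy => ?_⟩
    grind
  · have hother : ∀ k' ≠ k, (l.filter (key · = k')).filter (key · = k) = [] := fun k' hne => by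
      simp only [List.filter_eq_nil_iff, List.mem_filter]
      grind
    rw [List.filter_flatMap]
    by_cases hk : k ∈ ks
    · obtain ⟨s, t, rfl⟩ := List.append_of_mem hk
      have hnodup := hks.imp ne_of_lt
      rw [List.pairwise_append, List.pairwise_cons] at hnodup
      have hs : s.flatMap (fun k' => (l.filter (key · = k')).filter (key · = k)) = [] :=
        List.flatMap_eq_nil_iff.2 fun k' hk' => hother k' (hnodup.2.2 k' hk' k (by simp))
      have ht : t.flatMap (fun k' => (l.filter (key · = k')).filter (key · = k)) = [] :=
        List.flatMap_eq_nil_iff.2 fun k' hk' => hother k' (hnodup.2.1.1 k' hk').symm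
      rw [List.flatMap_append, List.flatMap_cons, hs, ht]
      simp
    · rw [List.filter_eq_nil_iff.2 (by grind), List.flatMap_eq_nil_iff]
      exact fun k' hk' => hother k' (by grind)

end SortedLists

section Fibers

variable {ι α β : Type*} [DecidableEq ι]

/-- The second components of the entries of `L` with first component `k`, in order. -/
def fiber (L : List (ι × α)) (k : ι) : List α :=
  (L.filter (·.1 = k)).map Prod.snd

theorem fiber_append (L L' : List (ι × α)) (k : ι) :
    fiber (L ++ L') k = fiber L k ++ fiber L' k := by
  simp [fiber]

theorem fiber_map_prodMap_id (g : α → β) (L : List (ι × α)) (k : ι) :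
    fiber (L.map (Prod.map id g)) k = (fiber L k).map g := by
  simp [fiber, List.filter_map, Function.comp_def]

@[simp]
theorem mem_fiber {L : List (ι × α)} {k : ι} {x : α} : x ∈ fiber L k ↔ (k, x) ∈ L := by
  simp [fiber]

theorem filter_fst_eq_map_fiber (L : List (ι × α)) (k : ι) :
    L.filter (·.1 = k) = (fiber L k).map (Prod.mk k) := by
  rw [fiber, List.map_map, List.map_congr_left (g := id), List.map_id]
  intro p hp
  exact Prod.ext (by simpa [eq_comm] using (List.mem_filter.1 hp).2) rfl

theorem count_fiber [DecidableEq α] (L : List (ι × α)) (k : ι) (x : α) :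
    (fiber L k).count x = L.count (k, x) := by
  induction L with
  | nil => rfl
  | cons p L ih =>
    rw [← List.singleton_append, fiber_append, List.count_append, List.count_append, ih]
    obtain ⟨i, y⟩ := p
    by_cases hi : i = k <;> simp [fiber, hi, List.count_singleton]

theorem perm_of_fiber_eq {L L' : List (ι × α)} (h : ∀ k, fiber L k = fiber L' k) : L.Perm L' := by
  classical
  exact List.perm_iff_count.2 fun p => by rw [← count_fiber, ← count_fiber, h]

theorem eq_append_cons_of_fiber_eq_cons {L : List (ι × α)} {k : ι} {x : α} {xs : List α}
    (h : fiber L k = x :: xs) : ∃ p s, L = p ++ (k, x) :: s ∧ fiber p k = [] := by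
  simp only [fiber, List.map_eq_cons_iff, List.filter_eq_cons_iff] at h
  obtain ⟨⟨i, y⟩, -, ⟨p, s, rfl, hp, hi, -⟩, rfl, -⟩ := h
  obtain rfl : i = k := by simpa using hi
  exact ⟨p, s, rfl, by simpa [fiber, List.filter_eq_nil_iff] using hp⟩

/-- The letters of the words `F`, each tagged with the index of its word, counting from `n`. -/
def tagFrom (n : ℕ) (F : List (List α)) : List (ℕ × α) :=
  (F.zipIdx n).flatMap fun p => p.1.map (Prod.mk p.2)

@[simp]
theorem tagFrom_nil (n : ℕ) : tagFrom n ([] : List (List α)) = [] := rfl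

@[simp]
theorem tagFrom_cons (n : ℕ) (w : List α) (F : List (List α)) :
    tagFrom n (w :: F) = w.map (Prod.mk n) ++ tagFrom (n + 1) F := by
  simp [tagFrom]

theorem le_of_mem_tagFrom {n : ℕ} {F : List (List α)} {p : ℕ × α} (hp : p ∈ tagFrom n F) :
    n ≤ p.1 := by
  simp only [tagFrom, List.mem_flatMap, List.mem_map] at hp
  obtain ⟨q, hq, x, -, rfl⟩ := hp
  exact List.le_snd_of_mem_zipIdx hq

theorem pairwise_tagFrom (n : ℕ) (F : List (List α)) :
    (tagFrom n F).Pairwise (·.1 ≤ ·.1) := by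
  induction F generalizing n with
  | nil => simp
  | cons w F ih =>
    simp only [tagFrom_cons, List.pairwise_append, List.pairwise_map]
    refine ⟨List.pairwise_of_forall fun _ _ => le_rfl, ih _, fun x hx y hy => ?_⟩
    have := le_of_mem_tagFrom hy
    grind

theorem map_snd_tagFrom (n : ℕ) (F : List (List α)) : (tagFrom n F).map Prod.snd = F.flatten := by
  induction F generalizing n with
  | nil => rfl
  | cons w F ih => simp [ih, Function.comp_def]

theorem fiber_tagFrom_add (n : ℕ) (F : List (List α)) (k : ℕ) :
    fiber (tagFrom n F) (n + k) = F.getD k [] := by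
  induction F generalizing n k with
  | nil => rfl
  | cons w F ih =>
    rw [tagFrom_cons, fiber_append]
    rcases k with _ | k
    · have hfiber : fiber (tagFrom (n + 1) F) n = [] :=
        List.eq_nil_iff_forall_not_mem.2 fun x hx => by
          simpa using le_of_mem_tagFrom (mem_fiber.1 hx)
      rw [Nat.add_zero, hfiber]
      simp [fiber, List.filter_map, Function.comp_def]
    · rw [← Nat.add_assoc, Nat.add_right_comm, ih]
      have hne : n ≠ n + 1 + k := by omega
      simp [fiber, List.filter_map, Function.comp_def, hne]

theorem fiber_tagFrom_zero (F : List (List α)) (k : ℕ) : fiber (tagFrom 0 F) k = F.getD k [] := by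
  simpa using fiber_tagFrom_add 0 F k

theorem fst_lt_length_of_mem_tagFrom {F : List (List α)} {p : ℕ × α} (hp : p ∈ tagFrom 0 F) :
    p.1 < F.length := by
  by_contra! hk
  have hmem : p.2 ∈ F.getD p.1 [] := fiber_tagFrom_zero F p.1 ▸ mem_fiber.2 hp
  rw [List.getD_eq_default _ _ hk] at hmem
  exact List.not_mem_nil hmem

end Fibers

section SplitBy

variable {α : Type*} {r : α → α → Bool} {l m g : List α} {gs : List (List α)}

theorem head?_eq_of_splitBy_eq_cons (h : m.splitBy r = g :: gs) : g.head? = m.head? := by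
  obtain ⟨rfl, hne, -⟩ := List.splitBy_eq_iff.1 h
  rw [List.mem_cons, not_or] at hne
  rw [List.flatten_cons, List.head?_append_of_ne_nil _ (Ne.symm hne.1)]

theorem splitBy_append_of_splitBy_eq_cons (hm : m.splitBy r = g :: gs)
    (hlg : (l ++ g).IsChain (r · ·)) : (l ++ m).splitBy r = (l ++ g) :: gs := by
  obtain ⟨rfl, hne, hchain, hcut⟩ := List.splitBy_eq_iff.1 hm
  refine List.splitBy_eq_iff.2 ⟨by simp, by simp_all, by simp_all, ?_⟩
  rw [List.isChain_cons] at hcut ⊢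
  refine ⟨fun b hb => ?_, hcut.2⟩
  obtain ⟨hg, hb', h⟩ := hcut.1 b hb
  exact ⟨by simp [hg], hb', by rwa [List.getLast_append_of_ne_nil _ hg]⟩

theorem splitBy_append_of_isChain (hne : l ≠ []) (hl : l.IsChain (r · ·)) (m : List α) :
    (l ++ m).splitBy r = l :: m.splitBy r ∨
      ∃ g gs, m.splitBy r = g :: gs ∧ (l ++ m).splitBy r = (l ++ g) :: gs := by
  by_cases hcut : ∀ x ∈ l.getLast?, ∀ y ∈ m.head?, r x y = false
  · left
    rw [List.splitBy_append hcut, List.splitBy_of_isChain hne hl, List.singleton_append]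
  · right
    push Not at hcut
    obtain ⟨x, hx, y, hy, hxy⟩ := hcut
    rcases hm : m.splitBy r with _ | ⟨g, gs⟩
    · simp [List.splitBy_eq_nil.1 hm] at hy
    · have hg := List.isChain_of_mem_splitBy (hm ▸ List.mem_cons_self : g ∈ m.splitBy r)
      have hlg : (l ++ g).IsChain (r · ·) := by
        refine List.isChain_append.2 ⟨hl, hg, fun x' hx' y' hy' => ?_⟩
        rw [head?_eq_of_splitBy_eq_cons hm] at hy'
        obtain rfl := Option.mem_unique hx hx'
        obtain rfl := Option.mem_unique hy hy'
        simpa using hxy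
      exact ⟨g, gs, rfl, splitBy_append_of_splitBy_eq_cons hm hlg⟩

end SplitBy

section DescentSentence

variable {A : Type*}

/-- The analogue of `coA` for a word `τ` of pairs (row, color) listing the boxes of a tableau in
reading order: the word of colors, cut at each step to a strictly lower row. Row `0` is the top
row, so a descent is a strict increase of the row index. -/
def descentSentence (τ : List (ℕ × A)) : Sentence A :=
  (τ.splitBy fun x y => y.1 ≤ x.1).map (List.map Prod.snd)

theorem isSentence_descentSentence (τ : List (ℕ × A)) : IsSentence (descentSentence τ) := by
  intro w hw
  obtain ⟨g, hg, rfl⟩ := List.mem_map.1 hw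
  simpa using List.ne_nil_of_mem_splitBy hg

theorem flatten_descentSentence (τ : List (ℕ × A)) :
    (descentSentence τ).flatten = τ.map Prod.snd := by
  rw [descentSentence, ← List.map_flatten, List.flatten_splitBy]

@[simp]
theorem descentSentence_nil : descentSentence ([] : List (ℕ × A)) = [] := rfl

theorem descentSentence_eq_nil {τ : List (ℕ × A)} : descentSentence τ = [] ↔ τ = [] := by
  simp [descentSentence]

theorem descentSentence_singleton (x : ℕ × A) : descentSentence [x] = [[x.2]] := rfl

theorem descentSentence_cons_cons_of_lt {x y : ℕ × A} (h : x.1 < y.1) (τ : List (ℕ × A)) :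
    descentSentence (x :: y :: τ) = [x.2] :: descentSentence (y :: τ) := by
  have := List.splitBy_append_cons (r := fun x y : ℕ × A => y.1 ≤ x.1) (l := [x]) (a := y) τ
    (by simpa using h)
  rw [descentSentence, ← List.singleton_append, this]
  rfl

theorem descentSentence_cons_cons_of_le {x y : ℕ × A} (h : y.1 ≤ x.1) (τ : List (ℕ × A)) :
    ∃ w ws, descentSentence (y :: τ) = w :: ws ∧
      descentSentence (x :: y :: τ) = (x.2 :: w) :: ws := by
  rcases hs : (y :: τ).splitBy fun x y => y.1 ≤ x.1 with _ | ⟨g, gs⟩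
  · simp at hs
  · have hg := List.isChain_of_mem_splitBy (hs ▸ List.mem_cons_self : g ∈ List.splitBy _ _)
    have hhead : g.head? = some y := head?_eq_of_splitBy_eq_cons hs
    refine ⟨g.map Prod.snd, gs.map (List.map Prod.snd), by simp [descentSentence, hs], ?_⟩
    rw [descentSentence, ← List.singleton_append, splitBy_append_of_splitBy_eq_cons hs]
    · rfl
    · rw [List.singleton_append, List.isChain_cons]
      exact ⟨by simpa [hhead] using h, hg⟩

theorem descentSentence_tagFrom {I : Sentence A} (hI : IsSentence I) (n : ℕ) :
    descentSentence (tagFrom n I) = I := by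
  induction I generalizing n with
  | nil => rfl
  | cons w I ih =>
    rw [IsSentence, List.forall_mem_cons] at hI
    have hw : (w.map (Prod.mk n)).IsChain fun x y => decide (y.1 ≤ x.1) :=
      (List.pairwise_map.2 (List.pairwise_of_forall (by simp))).isChain
    have hcut : ∀ x ∈ (w.map (Prod.mk n)).getLast?, ∀ y ∈ (tagFrom (n + 1) I).head?,
        decide (y.1 ≤ x.1) = false := fun x hx y hy => by
      have hxn := List.mem_of_mem_getLast? hx
      have hyn := le_of_mem_tagFrom (List.mem_of_mem_head? hy)
      grind
    rw [tagFrom_cons, descentSentence, List.splitBy_append hcut,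
      List.splitBy_of_isChain (by simpa using hI.1) hw, List.map_append,
      ← descentSentence, ih hI.2]
    simp [Function.comp_def]

end DescentSentence

section Refinement

variable {A : Type*}

theorem refines_nil_left {K : Sentence A} : Refines [] K ↔ K = [] := by
  constructor
  · rintro ⟨P, hP, hflat, rfl⟩
    rw [List.flatten_eq_nil_iff] at hflat
    simpa [List.eq_nil_iff_forall_not_mem] using fun p hp => hP p hp (hflat p hp)
  · rintro rfl
    exact ⟨[], by simp⟩

theorem refines_cons_iff {w : List A} {ws K : Sentence A} (hws : IsSentence ws) :
    Refines (w :: ws) K ↔ (∃ K', K = w :: K' ∧ Refines ws K') ∨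
      ∃ u K', u ≠ [] ∧ K = (w ++ u) :: K' ∧ Refines ws (u :: K') := by
  constructor
  · rintro ⟨P, hP, hflat, rfl⟩
    rcases P with _ | ⟨_ | ⟨v, q⟩, P⟩
    · simp at hflat
    · simp at hP
    · simp only [List.flatten_cons, List.cons_append, List.cons.injEq] at hflat
      obtain ⟨rfl, rfl⟩ := hflat
      rw [List.forall_mem_cons] at hP
      rcases q with _ | ⟨u, q⟩
      · exact Or.inl ⟨P.map List.flatten, by simp, P, hP.2, by simp, rfl⟩
      · have hu : u ≠ [] := hws u (by simp)
        exact Or.inr ⟨(u :: q).flatten, P.map List.flatten, by simp [hu], by simp,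
          (u :: q) :: P, by simpa using hP.2, by simp, rfl⟩
  · rintro (⟨K', rfl, P, hP, rfl, rfl⟩ | ⟨u, K', -, rfl, P, hP, rfl, hPK⟩)
    · exact ⟨[w] :: P, by simpa using hP, by simp, by simp⟩
    · obtain ⟨q, P, rfl, rfl, rfl⟩ := List.map_eq_cons_iff.1 hPK
      rw [List.forall_mem_cons] at hP
      exact ⟨(w :: q) :: P, by simpa using hP.2, by simp, by simp⟩

theorem Refines.flatten_eq {J K : Sentence A} (h : Refines J K) : J.flatten = K.flatten := by
  obtain ⟨P, -, rfl, rfl⟩ := h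
  rw [List.flatten_flatten]

theorem exists_append_of_refines_cons_descentSentence {w : List A} {ws : Sentence A}
    (hws : IsSentence ws) {τ : List (ℕ × A)} (h : Refines (w :: ws) (descentSentence τ)) :
    ∃ σ τ', τ = σ ++ τ' ∧ σ.map Prod.snd = w ∧ σ.IsChain (fun x y => y.1 ≤ x.1) ∧
      Refines ws (descentSentence τ') := by
  rcases (refines_cons_iff hws).1 h with ⟨K, hK, href⟩ | ⟨u, K, hu, hK, href⟩
  · obtain ⟨σ, gs, hs, rfl, rfl⟩ := List.map_eq_cons_iff.1 hK
    obtain ⟨rfl, hne, hchain, hcut⟩ := List.splitBy_eq_iff.1 hs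
    rw [List.forall_mem_cons] at hchain
    refine ⟨σ, gs.flatten, rfl, rfl, by simpa using hchain.1, ?_⟩
    rwa [descentSentence, List.splitBy_flatten (by simp_all) hchain.2 hcut.tail]
  · obtain ⟨_, gs, hs, hσυ, rfl⟩ := List.map_eq_cons_iff.1 hK
    obtain ⟨σ, υ, rfl, rfl, rfl⟩ := List.map_eq_append_iff.1 hσυ
    obtain ⟨rfl, hne, hchain, hcut⟩ := List.splitBy_eq_iff.1 hs
    rw [List.forall_mem_cons, List.isChain_append] at hchain
    have hυ : υ ≠ [] := by simpa using hu
    refine ⟨σ, (υ :: gs).flatten, by simp, rfl, by simpa using hchain.1.1, ?_⟩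
    rw [descentSentence, List.splitBy_flatten]
    · exact href
    · simp_all
    · exact List.forall_mem_cons.2 ⟨hchain.1.2.1, hchain.2⟩
    · rw [List.isChain_cons] at hcut ⊢
      refine ⟨fun b hb => ?_, hcut.2⟩
      obtain ⟨_, hb', h⟩ := hcut.1 b hb
      exact ⟨hυ, hb', by rwa [List.getLast_append_of_ne_nil _ hυ] at h⟩

theorem refines_cons_descentSentence_append {ws : Sentence A} (hws : IsSentence ws)
    {σ τ : List (ℕ × A)} (hσ : σ ≠ []) (hchain : σ.IsChain (fun x y => y.1 ≤ x.1))
    (h : Refines ws (descentSentence τ)) :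
    Refines (σ.map Prod.snd :: ws) (descentSentence (σ ++ τ)) := by
  rw [refines_cons_iff hws]
  rcases splitBy_append_of_isChain (r := fun x y => y.1 ≤ x.1) hσ (by simpa using hchain) τ
    with hs | ⟨g, gs, hg, hs⟩
  · exact Or.inl ⟨descentSentence τ, by rw [descentSentence, hs]; rfl, h⟩
  · have hgne := List.ne_nil_of_mem_splitBy (hg ▸ List.mem_cons_self : g ∈ List.splitBy _ _)
    refine Or.inr ⟨g.map Prod.snd, gs.map (List.map Prod.snd), by simpa using hgne, ?_, ?_⟩
    · rw [descentSentence, hs, List.map_cons, List.map_append]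
    · rwa [descentSentence, hg, List.map_cons] at h

end Refinement

section Monomials

variable {A : Type*}

/-- The position of a box `(row, color, value)` in the type-reading order: by value, and from the
bottom row to the top row among equal values. Boxes of one row with equal values are tied; their
left-to-right order is kept track of by the fibers of a list of boxes over the rows. -/
def readKey (e : ℕ × A × ℕ) : ℕ ×ₗ ℕᵒᵈ :=
  toLex (e.2.2, OrderDual.toDual e.1)

/-- The boxes `(row, color, value)` of a list are listed in type-reading order. -/
def IsReadOrdered (E : List (ℕ × A × ℕ)) : Prop :=
  E.Pairwise (readKey · ≤ readKey ·)

/-- The row and the color of each box `(row, color, value)` of a list. -/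
def letters (E : List (ℕ × A × ℕ)) : List (ℕ × A) :=
  E.map (Prod.map id Prod.fst)

/-- The list of letters `x_{a,j}` of a monomial, as pairs `(a, j)`. -/
def expand (m : Mono A) : List (A × ℕ) :=
  (m.1.zip m.2).flatMap fun p => p.1.map (·, p.2)

theorem readKey_le_readKey {e e' : ℕ × A × ℕ} :
    readKey e ≤ readKey e' ↔ e.2.2 < e'.2.2 ∨ e.2.2 = e'.2.2 ∧ e'.1 ≤ e.1 :=
  Prod.Lex.toLex_le_toLex

@[simp]
theorem expand_cons (w : List A) (ws : List (List A)) (j : ℕ) (js : List ℕ) :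
    expand (w :: ws, j :: js) = w.map (·, j) ++ expand (ws, js) := rfl

theorem expand_map_left (g : ℕ → List A) (js : List ℕ) :
    expand (js.map g, js) = js.flatMap fun j => (g j).map (·, j) := by
  induction js with
  | nil => rfl
  | cons j js ih => rw [List.map_cons, expand_cons, ih, List.flatMap_cons]

theorem snd_mem_of_mem_expand {m : Mono A} {p : A × ℕ} (hp : p ∈ expand m) : p.2 ∈ m.2 := by
  simp only [expand, List.mem_flatMap, List.mem_map] at hp
  obtain ⟨q, hq, a, -, rfl⟩ := hp
  exact (List.of_mem_zip hq).2

theorem ValidMono.tail {w : List A} {ws : List (List A)} {j : ℕ} {js : List ℕ}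
    (h : ValidMono (w :: ws, j :: js)) : ValidMono (ws, js) :=
  ⟨by simpa using h.1, h.2.1.tail, fun i hi => h.2.2.1 i (by simp [hi]),
    fun v hv => h.2.2.2 v (by simp [hv])⟩

theorem ValidMono.lt_of_mem {w : List A} {ws : List (List A)} {j : ℕ} {js : List ℕ}
    (h : ValidMono (w :: ws, j :: js)) {i : ℕ} (hi : i ∈ js) : j < i :=
  (List.pairwise_cons.1 h.2.1.pairwise).1 i hi

theorem eq_of_letters_eq_of_map_snd_snd_eq {E E' : List (ℕ × A × ℕ)} (hl : letters E = letters E')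
    (hs : E.map (·.2.2) = E'.map (·.2.2)) : E = E' := by
  induction E generalizing E' with
  | nil => exact (List.map_eq_nil_iff.1 hs.symm).symm
  | cons e E ih =>
    rcases E' with _ | ⟨e', E'⟩
    · simp at hs
    · simp only [letters, List.map_cons, List.cons.injEq] at hl hs
      have hrow : e.1 = e'.1 := (Prod.ext_iff.1 hl.1).1
      have hcolor : e.2.1 = e'.2.1 := (Prod.ext_iff.1 hl.1).2
      rw [ih hl.2 hs.2, Prod.ext hrow (Prod.ext hcolor hs.1)]

theorem refines_descentSentence_of_isReadOrdered {m : Mono A} (hm : ValidMono m)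
    {E : List (ℕ × A × ℕ)} (hE : IsReadOrdered E) (hsnd : E.map Prod.snd = expand m) :
    Refines m.1 (descentSentence (letters E)) := by
  obtain ⟨ws, js⟩ := m
  induction ws generalizing js E with
  | nil =>
    obtain rfl : E = [] := by simpa [expand] using hsnd
    exact refines_nil_left.2 rfl
  | cons w ws ih =>
    rcases js with _ | ⟨j, js⟩
    · simpa using hm.1
    · rw [expand_cons] at hsnd
      obtain ⟨E₁, E₂, rfl, h₁, h₂⟩ := List.map_eq_append_iff.1 hsnd
      obtain ⟨hE₁, hE₂, -⟩ := List.pairwise_append.1 hE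
      have hcolors : (letters E₁).map Prod.snd = w := by
        simpa [letters, Function.comp_def] using congrArg (List.map Prod.fst) h₁
      have hvalue : ∀ e ∈ E₁, e.2.2 = j := fun e he => by
        have := h₁ ▸ List.mem_map_of_mem (f := Prod.snd) he
        grind
      have hrows : (letters E₁).IsChain (fun x y => y.1 ≤ x.1) := by
        refine (List.pairwise_map.2 (hE₁.imp_of_mem fun he he' hle => ?_)).isChain
        rw [readKey_le_readKey, hvalue _ he, hvalue _ he'] at hle
        simpa using hle
      have hne : letters E₁ ≠ [] := by
        rintro h
        exact hm.2.2.2 w (by simp) (by rw [← hcolors, h]; rfl)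
      rw [letters, List.map_append, ← letters, ← letters, ← hcolors]
      exact refines_cons_descentSentence_append hm.tail.2.2.2 hne hrows (ih hE₂ js hm.tail h₂)

theorem exists_isReadOrdered_of_refines_descentSentence {m : Mono A} (hm : ValidMono m)
    {τ : List (ℕ × A)} (h : Refines m.1 (descentSentence τ)) :
    ∃ E, IsReadOrdered E ∧ letters E = τ ∧ E.map Prod.snd = expand m := by
  obtain ⟨ws, js⟩ := m
  induction ws generalizing js τ with
  | nil =>
    obtain rfl := descentSentence_eq_nil.1 (refines_nil_left.1 h)
    exact ⟨[], List.Pairwise.nil, rfl, rfl⟩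
  | cons w ws ih =>
    rcases js with _ | ⟨j, js⟩
    · simpa using hm.1
    · obtain ⟨σ, τ', rfl, rfl, hσ, hτ'⟩ :=
        exists_append_of_refines_cons_descentSentence hm.tail.2.2.2 h
      obtain ⟨E, hE, rfl, hsnd⟩ := ih js hm.tail hτ'
      have hrows : IsReadOrdered (σ.map fun t => (t.1, t.2, j)) := by
        have hσ' : σ.Pairwise fun x y => y.1 ≤ x.1 :=
          haveI : IsTrans (ℕ × A) fun x y => y.1 ≤ x.1 := ⟨fun _ _ _ h h' => h'.trans h⟩
          hσ.pairwise
        refine List.pairwise_map.2 (hσ'.imp fun hle => ?_)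
        exact readKey_le_readKey.2 (Or.inr ⟨rfl, hle⟩)
      refine ⟨(σ.map fun t => (t.1, t.2, j)) ++ E, List.pairwise_append.2 ⟨hrows, hE, ?_⟩, ?_, ?_⟩
      · intro e he e' he'
        obtain ⟨t, -, rfl⟩ := List.mem_map.1 he
        have hmem := snd_mem_of_mem_expand (hsnd ▸ List.mem_map_of_mem (f := Prod.snd) he')
        exact readKey_le_readKey.2 (Or.inl (hm.lt_of_mem hmem))
      · simp [letters, Function.comp_def]
      · simp [hsnd]

theorem mem_snd_iff_of_validMono {m : Mono A} (hm : ValidMono m) {j : ℕ} :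
    j ∈ m.2 ↔ ∃ p ∈ expand m, p.2 = j := by
  refine ⟨fun hj => ?_, fun ⟨p, hp, hj⟩ => hj ▸ snd_mem_of_mem_expand hp⟩
  obtain ⟨i, hi, rfl⟩ := List.getElem_of_mem hj
  have hi' : i < m.1.length := hm.1 ▸ hi
  obtain ⟨a, ha⟩ := List.exists_mem_of_ne_nil _ (hm.2.2.2 _ (List.getElem_mem hi'))
  refine ⟨(a, m.2[i]), List.mem_flatMap.2 ⟨(m.1[i], m.2[i]), ?_, List.mem_map_of_mem ha⟩, rfl⟩
  exact List.mem_iff_getElem.2 ⟨i, by simp [hi, hi'], by simp⟩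

/-- The word of letters with index `v` in a list of letters `x_{a,j}`, as pairs `(a, j)`. -/
def wordAt (L : List (A × ℕ)) (v : ℕ) : List A :=
  (L.filter (·.2 = v)).map Prod.fst

theorem map_wordAt_expand {m : Mono A} (hm : ValidMono m) :
    m.2.map (wordAt (expand m)) = m.1 := by
  obtain ⟨ws, js⟩ := m
  induction ws generalizing js with
  | nil => rw [List.length_eq_zero_iff.1 hm.1.symm, List.map_nil]
  | cons w ws ih =>
    rcases js with _ | ⟨j, js⟩
    · simpa using hm.1
    · have hhead : wordAt (expand (ws, js)) j = [] := by
        simp only [wordAt, List.map_eq_nil_iff, List.filter_eq_nil_iff, decide_eq_true_eq]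
        exact fun p hp => (hm.lt_of_mem (snd_mem_of_mem_expand hp)).ne'
      have htail : ∀ i ∈ js, wordAt (w.map (·, j)) i = [] := fun i hi => by
        have hji := (hm.lt_of_mem hi).ne
        simp [wordAt, List.filter_map, Function.comp_def, hji]
      have happend : ∀ i, wordAt (expand (w :: ws, j :: js)) i =
          wordAt (w.map (·, j)) i ++ wordAt (expand (ws, js)) i := fun i => by simp [wordAt]
      rw [List.map_cons, happend, hhead, List.map_congr_left (g := wordAt (expand (ws, js)))
        fun i hi => by rw [happend, htail i hi, List.nil_append], ih js hm.tail]
      simp [wordAt, List.filter_map, Function.comp_def]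

theorem injOn_expand_validMono : Set.InjOn expand {m : Mono A | ValidMono m} := by
  rintro m hm m' hm' h
  have hsnd : m.2 = m'.2 := hm.2.1.pairwise.eq_of_mem_iff hm'.2.1.pairwise fun j => by
    rw [mem_snd_iff_of_validMono hm, mem_snd_iff_of_validMono hm', h]
  refine Prod.ext ?_ hsnd
  rw [← map_wordAt_expand hm, ← map_wordAt_expand hm', h, hsnd]

theorem le_maxEntry {f : Filling} {x : ℕ} (hx : x ∈ f.flatten) : x ≤ maxEntry f :=
  List.le_max_of_le' 0 hx le_rfl

theorem validMono_monoOf (I : Sentence A) (f : Filling) : ValidMono (monoOf I f) := by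
  refine ⟨by simp [monoOf], ?_, by simp +contextual [monoOf], ?_⟩
  · exact ((List.pairwise_map.2 (List.pairwise_lt_range.imp (by simp))).filter _).isChain
  · intro w hw
    obtain ⟨v, hv, rfl⟩ := List.mem_map.1 hw
    simpa using (List.mem_filter.1 hv).2

theorem expand_monoOf {I : Sentence A} {f : Filling} {L : List (A × ℕ)}
    (hL : L.Pairwise (·.2 ≤ ·.2)) (hmem : ∀ p ∈ L, 1 ≤ p.2 ∧ p.2 ∈ f.flatten)
    (htype : ∀ v, typeWord I f v = wordAt L v) : expand (monoOf I f) = L := by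
  have hword : ∀ v, (wordAt L v).map (·, v) = L.filter (·.2 = v) := fun v => by
    rw [wordAt, List.map_map, List.map_congr_left (g := id), List.map_id]
    intro p hp
    exact Prod.ext rfl (by simpa [eq_comm] using (List.mem_filter.1 hp).2)
  have hexpand : expand (monoOf I f) = (monoOf I f).2.flatMap fun v => L.filter (·.2 = v) := by
    simp only [← hword, ← htype]
    exact expand_map_left _ _
  rw [hexpand]
  refine flatMap_filter_key_eq (validMono_monoOf I f).2.1.pairwise hL fun p hp => ?_
  obtain ⟨hpos, hmemf⟩ := hmem p hp
  have hne : typeWord I f p.2 ≠ [] := by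
    rw [htype]
    exact List.ne_nil_of_mem (List.mem_map_of_mem (List.mem_filter.2 ⟨hp, by simp⟩))
  simp only [monoOf, List.mem_filter, List.mem_map, List.mem_range]
  exact ⟨⟨p.2 - 1, by have := le_maxEntry hmemf; omega, by omega⟩, by simpa using hne⟩

end Monomials

section Readings

variable {A : Type*} {I : Sentence A} {E E' : List (ℕ × A × ℕ)}

/-- A word of row indices in which every occurrence of `k + 1` is preceded by an occurrence of
`k`. This is the strict increase of the first column of a tableau, read off its reading word. -/
def IsGrowthWord (ρ : List ℕ) : Prop :=
  ∀ p k s, ρ = p ++ (k + 1) :: s → k ∈ p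

/-- The words of pairs (row, color) listing the boxes of a standard tableau of shape `I` in the
order of their entries. -/
def IsRowWord (I : Sentence A) (τ : List (ℕ × A)) : Prop :=
  (∀ k, fiber τ k = I.getD k []) ∧ IsGrowthWord (τ.map Prod.fst)

/-- The lists of boxes `(row, color, value)` of the colored immaculate tableaux of shape `I`, in
type-reading order. -/
structure IsReading (I : Sentence A) (E : List (ℕ × A × ℕ)) : Prop where
  ordered : IsReadOrdered E
  rowWord : IsRowWord I (letters E)
  one_le : ∀ e ∈ E, 1 ≤ e.2.2

/-- The filling with `r` rows whose boxes are the boxes `(row, color, value)` of `E`. -/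
def filling (r : ℕ) (E : List (ℕ × A × ℕ)) : Filling :=
  (List.range r).map fun k => (fiber E k).map Prod.snd

theorem IsReadOrdered.eq_of_fiber_eq (hE : IsReadOrdered E) (hE' : IsReadOrdered E')
    (h : ∀ k, fiber E k = fiber E' k) : E = E' := by
  refine eq_of_pairwise_key_le hE hE' fun key => ?_
  have hfilter : ∀ L : List (ℕ × A × ℕ), L.filter (readKey · = key) =
      (L.filter (·.1 = OrderDual.ofDual (ofLex key).2)).filter (·.2.2 = (ofLex key).1) := by
    intro L
    rw [List.filter_filter]
    refine List.filter_congr fun e _ => ?_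
    rw [Bool.eq_iff_iff, Bool.and_eq_true, decide_eq_true_iff, decide_eq_true_iff,
      decide_eq_true_iff]
    exact Prod.ext_iff
  rw [hfilter, hfilter, filter_fst_eq_map_fiber, filter_fst_eq_map_fiber, h]

theorem IsReadOrdered.pairwise_map_snd_fiber (hE : IsReadOrdered E) (k : ℕ) :
    ((fiber E k).map Prod.snd).Pairwise (· ≤ ·) := by
  rw [fiber, List.map_map, List.pairwise_map]
  refine (hE.filter _).imp fun h => ?_
  grind [readKey_le_readKey]

theorem fiber_letters (k : ℕ) : fiber (letters E) k = (fiber E k).map Prod.fst :=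
  fiber_map_prodMap_id _ _ _

theorem IsRowWord.map_fst_fiber (h : IsRowWord I (letters E)) (k : ℕ) :
    (fiber E k).map Prod.fst = I.getD k [] := by
  rw [← fiber_letters, h.1]

theorem getD_ne_nil_iff (hI : IsSentence I) {k : ℕ} : I.getD k [] ≠ [] ↔ k < I.length := by
  by_cases hk : k < I.length
  · simpa [hk] using hI _ (List.getElem_mem hk)
  · simp [hk]

theorem IsRowWord.fiber_ne_nil (hI : IsSentence I) (h : IsRowWord I (letters E)) {k : ℕ} :
    fiber E k ≠ [] ↔ k < I.length := by
  rw [ne_eq, ← List.map_eq_nil_iff (f := Prod.fst), h.map_fst_fiber, ← ne_eq, getD_ne_nil_iff hI]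

theorem IsRowWord.fiber_eq_nil (h : IsRowWord I (letters E)) {k : ℕ} (hk : I.length ≤ k) :
    fiber E k = [] := by
  rw [← List.map_eq_nil_iff (f := Prod.fst), h.map_fst_fiber, List.getD_eq_default _ _ hk]

theorem IsRowWord.fst_lt_length (h : IsRowWord I (letters E)) {e : ℕ × A × ℕ} (he : e ∈ E) :
    e.1 < I.length := by
  by_contra! hk
  exact List.ne_nil_of_mem (mem_fiber.2 (show (e.1, e.2) ∈ E from he)) (h.fiber_eq_nil hk)

theorem isChain_filterMap_head?_iff {f : Filling} (hf : ∀ row ∈ f, row ≠ []) :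
    (f.filterMap List.head?).IsChain (· < ·) ↔
      ∀ k, k + 1 < f.length → (f.getD k []).headD 0 < (f.getD (k + 1) []).headD 0 := by
  have hmap : f.filterMap List.head? = f.map (·.headD 0) := by
    rw [← List.filterMap_eq_map]
    refine List.filterMap_congr fun row hrow => ?_
    obtain ⟨x, xs, rfl⟩ := List.exists_cons_of_ne_nil (hf row hrow)
    rfl
  rw [hmap, List.isChain_map, List.isChain_iff_getElem]
  refine forall_congr' fun k => forall_congr' fun hk => ?_
  rw [List.getD_eq_getElem _ _ hk, List.getD_eq_getElem _ _ (Nat.lt_of_succ_lt hk)]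

theorem IsReadOrdered.headD_fiber_le (hE : IsReadOrdered E) {e : ℕ × A × ℕ} (he : e ∈ E) :
    ((fiber E e.1).map Prod.snd).headD 0 ≤ e.2.2 := by
  have hmem : e.2.2 ∈ (fiber E e.1).map Prod.snd := List.mem_map_of_mem (mem_fiber.2 he)
  have hsorted := hE.pairwise_map_snd_fiber e.1
  rcases hfib : (fiber E e.1).map Prod.snd with _ | ⟨x, xs⟩
  · simp [hfib] at hmem
  · rw [hfib] at hmem hsorted
    rcases List.mem_cons.1 hmem with h | h
    exacts [h.ge, (List.pairwise_cons.1 hsorted).1 _ h]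

theorem IsReadOrdered.isGrowthWord_iff {r : ℕ} (hE : IsReadOrdered E)
    (hr : ∀ k, fiber E k ≠ [] ↔ k < r) :
    IsGrowthWord (E.map Prod.fst) ↔ ∀ k, k + 1 < r →
      ((fiber E k).map Prod.snd).headD 0 < ((fiber E (k + 1)).map Prod.snd).headD 0 := by
  constructor
  · intro hgrowth k hk
    obtain ⟨x, xs, hx⟩ := List.exists_cons_of_ne_nil ((hr (k + 1)).2 hk)
    obtain ⟨p, s, hEps, -⟩ := eq_append_cons_of_fiber_eq_cons hx
    obtain ⟨e, he, rfl⟩ := List.mem_map.1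
      (hgrowth (p.map Prod.fst) k (s.map Prod.fst) (by rw [hEps]; simp))
    have hle := (List.pairwise_append.1 (hEps ▸ hE)).2.2 e he _ List.mem_cons_self
    have := hE.headD_fiber_le (e := e) (by simp [hEps, he])
    rw [hx, List.map_cons, List.headD_cons]
    grind [readKey_le_readKey]
  · intro hcol p k s hps
    obtain ⟨P, S', rfl, rfl, hS'⟩ := List.map_eq_append_iff.1 hps
    obtain ⟨e, S, rfl, he, rfl⟩ := List.map_eq_cons_iff.1 hS'
    have hk : k + 1 < r := (hr _).1 (List.ne_nil_of_mem ((mem_fiber (x := e.2)).2 (by simp [← he])))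
    obtain ⟨y, ys, hy⟩ := List.exists_cons_of_ne_nil ((hr k).2 (by omega))
    have hlt : y.2 < e.2.2 := by
      have := hcol k hk
      rw [hy, List.map_cons, List.headD_cons] at this
      exact this.trans_le (he ▸ hE.headD_fiber_le (e := e) (by simp))
    have hmem : (k, y) ∈ P ++ e :: S := mem_fiber.1 (by simp [hy])
    rcases List.mem_append.1 hmem with hP | hS
    · exact List.mem_map_of_mem (f := Prod.fst) hP
    · exfalso
      rcases List.mem_cons.1 hS with rfl | hS
      · simp at hlt
      · have hle := (List.pairwise_cons.1 (List.pairwise_append.1 hE).2.1).1 _ hS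
        grind [readKey_le_readKey]

theorem filling_length (r : ℕ) (E : List (ℕ × A × ℕ)) : (filling r E).length = r := by
  simp [filling]

theorem getD_filling {r k : ℕ} (hk : k < r) :
    (filling r E).getD k [] = (fiber E k).map Prod.snd := by
  simp [filling, hk]

theorem IsRowWord.zip_filling (h : IsRowWord I (letters E)) :
    I.zip (filling I.length E) =
      (List.range I.length).map fun k => ((fiber E k).map Prod.fst, (fiber E k).map Prod.snd) := by
  refine List.ext_getElem (by simp [filling]) fun k hk _ => ?_
  have hkI : k < I.length := by simp at hk; omega
  simp only [h.map_fst_fiber, List.getElem_zip, filling, List.getElem_map, List.getElem_range,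
    List.getD_eq_getElem _ _ hkI]

theorem IsReading.isCIT_filling (hI : IsSentence I) (hE : IsReading I E) :
    IsCIT I (filling I.length E) := by
  refine ⟨?_, ?_, ?_, ?_⟩
  · refine List.ext_getElem (by simp [filling]) fun k hk hk' => ?_
    have hkI : k < I.length := by simpa using hk'
    have hlen := congrArg List.length (hE.rowWord.map_fst_fiber k)
    rw [List.getD_eq_getElem _ _ hkI, List.length_map] at hlen
    simpa [filling] using hlen
  · simp only [filling, List.mem_map]
    rintro _ ⟨k, -, rfl⟩
    exact (hE.ordered.pairwise_map_snd_fiber k).isChain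
  · have hne : ∀ row ∈ filling I.length E, row ≠ [] := by
      simp only [filling, List.mem_map, List.mem_range]
      rintro _ ⟨k, hk, rfl⟩
      simpa using (hE.rowWord.fiber_ne_nil hI).2 hk
    refine (isChain_filterMap_head?_iff hne).2 fun k hk => ?_
    rw [filling_length] at hk
    rw [getD_filling hk, getD_filling (by omega)]
    refine (hE.ordered.isGrowthWord_iff fun k => hE.rowWord.fiber_ne_nil hI).1 ?_ k hk
    simpa [letters, Function.comp_def] using hE.rowWord.2
  · simp only [filling, List.mem_flatten, List.mem_map]
    rintro _ ⟨_, ⟨k, -, rfl⟩, hx⟩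
    obtain ⟨y, hy, rfl⟩ := List.mem_map.1 hx
    exact hE.one_le _ (mem_fiber.1 hy)

theorem fiber_insertionSort_readKey {L : List (ℕ × A × ℕ)} {k : ℕ}
    (hL : ((fiber L k).map Prod.snd).Pairwise (· ≤ ·)) :
    fiber (L.insertionSort (readKey · ≤ readKey ·)) k = fiber L k := by
  have hsorted : (L.filter (·.1 = k)).Pairwise (readKey · ≤ readKey ·) := by
    rw [filter_fst_eq_map_fiber, List.pairwise_map]
    refine (List.pairwise_map.1 hL).imp fun h => readKey_le_readKey.2 ?_
    simpa using h.lt_or_eq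
  have hsub := (List.sublist_insertionSort hsorted List.filter_sublist).filter (·.1 = k)
  have hlen := ((List.perm_insertionSort (readKey · ≤ readKey ·) L).filter (·.1 = k)).length_eq
  simp only [List.filter_filter, Bool.and_self] at hsub
  rw [fiber, fiber, ← hsub.eq_of_length hlen.symm]

theorem IsCIT.length_getD {f : Filling} (hf : IsCIT I f) (k : ℕ) :
    (I.getD k []).length = (f.getD k []).length := by
  have h := congrArg (·[k]?) hf.1
  simp only [List.getElem?_map] at h
  simp only [List.getD_eq_getElem?_getD]
  rcases hI : I[k]? with _ | w <;> rcases hf : f[k]? with _ | row <;> simp_all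

theorem fiber_tagFrom_zipWith_zip (f : Filling) (k : ℕ) :
    fiber (tagFrom 0 (List.zipWith List.zip I f)) k = (I.getD k []).zip (f.getD k []) := by
  rw [fiber_tagFrom_zero]
  simp only [List.getD_eq_getElem?_getD, List.getElem?_zipWith]
  rcases I[k]? with _ | w <;> rcases f[k]? with _ | row <;> simp

theorem IsCIT.pairwise_getD {f : Filling} (hf : IsCIT I f) (k : ℕ) :
    (f.getD k []).Pairwise (· ≤ ·) := by
  by_cases hk : k < f.length
  · rw [List.getD_eq_getElem _ _ hk]
    exact (hf.2.1 _ (List.getElem_mem hk)).pairwise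
  · rw [List.getD_eq_default _ _ (not_lt.1 hk)]
    exact List.Pairwise.nil

theorem IsCIT.exists_isReadOrdered {f : Filling} (hf : IsCIT I f) :
    ∃ E, IsReadOrdered E ∧ ∀ k, fiber E k = (I.getD k []).zip (f.getD k []) := by
  refine ⟨(tagFrom 0 (List.zipWith List.zip I f)).insertionSort (readKey · ≤ readKey ·),
    List.pairwise_insertionSort _ _, fun k => ?_⟩
  rw [fiber_insertionSort_readKey, fiber_tagFrom_zipWith_zip]
  rw [fiber_tagFrom_zipWith_zip, List.map_snd_zip (hf.length_getD k).ge]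
  exact hf.pairwise_getD k

theorem IsCIT.exists_filling_eq {f : Filling} (hI : IsSentence I) (hf : IsCIT I f) :
    ∃ E, IsReading I E ∧ filling I.length E = f := by
  obtain ⟨E, hordered, hfiber⟩ := hf.exists_isReadOrdered
  have hlen : f.length = I.length := by simpa using congrArg List.length hf.1
  have hfst : ∀ k, (fiber E k).map Prod.fst = I.getD k [] := fun k => by
    rw [hfiber, List.map_fst_zip (hf.length_getD k).le]
  have hsnd : ∀ k, (fiber E k).map Prod.snd = f.getD k [] := fun k => by
    rw [hfiber, List.map_snd_zip (hf.length_getD k).ge]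
  have hfill : filling I.length E = f := by
    refine List.ext_getElem (by simp [filling, hlen]) fun k _ hk => ?_
    rw [← List.getD_eq_getElem _ [] hk, ← hsnd]
    simp [filling]
  have hne : ∀ k, fiber E k ≠ [] ↔ k < I.length := fun k => by
    rw [ne_eq, ← List.map_eq_nil_iff (f := Prod.fst), hfst, ← ne_eq, getD_ne_nil_iff hI]
  have hrows : ∀ row ∈ f, row ≠ [] := fun row hrow => by
    obtain ⟨k, hk, rfl⟩ := List.getElem_of_mem hrow
    rw [← List.getD_eq_getElem _ [] hk, ← hsnd, ne_eq, List.map_eq_nil_iff]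
    exact (hne k).2 (hlen ▸ hk)
  refine ⟨E, ⟨hordered, ⟨fun k => by rw [fiber_letters, hfst], ?_⟩, fun e he => ?_⟩, hfill⟩
  · have hcol := (isChain_filterMap_head?_iff hrows).1 hf.2.2.1
    simp only [hlen, ← hsnd] at hcol
    simpa [letters, Function.comp_def] using (hordered.isGrowthWord_iff hne).2 hcol
  · have hmem : e.2.2 ∈ f.getD e.1 [] := hsnd e.1 ▸ List.mem_map_of_mem (mem_fiber.2 he)
    have hlt : e.1 < f.length := hlen ▸ (hne _).1 (List.ne_nil_of_mem (mem_fiber.2 he))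
    rw [List.getD_eq_getElem _ _ hlt] at hmem
    exact hf.2.2.2 _ (List.mem_flatten.2 ⟨_, List.getElem_mem hlt, hmem⟩)

theorem bijOn_filling (hI : IsSentence I) :
    Set.BijOn (filling I.length) {E | IsReading I E} {f | IsCIT I f} := by
  refine ⟨fun E hE => hE.isCIT_filling hI, fun E hE E' hE' h => ?_,
    fun f hf => hf.exists_filling_eq hI⟩
  refine hE.ordered.eq_of_fiber_eq hE'.ordered fun k => ?_
  have hfst := (hE.rowWord.map_fst_fiber k).trans (hE'.rowWord.map_fst_fiber k).symm
  by_cases hk : k < I.length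
  · have hsnd := congrArg (·.getD k []) h
    simp only [getD_filling hk] at hsnd
    rw [List.zip_of_prod hfst hsnd, ← List.zip_of_prod rfl rfl]
  · rw [hE.rowWord.fiber_eq_nil (not_lt.1 hk), hE'.rowWord.fiber_eq_nil (not_lt.1 hk)]

end Readings

section Fillings

variable {A : Type*} {I : Sentence A} {E E' : List (ℕ × A × ℕ)}

theorem IsRowWord.flatten_filling_perm (h : IsRowWord I (letters E)) :
    (filling I.length E).flatten.Perm (E.map (·.2.2)) := by
  have hperm : (tagFrom 0 ((List.range I.length).map (fiber E))).Perm E := by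
    refine perm_of_fiber_eq fun k => ?_
    rw [fiber_tagFrom_zero]
    by_cases hk : k < I.length
    · simp [hk]
    · rw [List.getD_eq_default _ _ (by simpa using hk), h.fiber_eq_nil (not_lt.1 hk)]
  have := hperm.map (·.2.2)
  rwa [← Function.comp_def Prod.snd Prod.snd, ← List.map_map, map_snd_tagFrom, List.map_flatten,
    List.map_map] at this

theorem rowWith_map_fst_map_snd (L : List (A × ℕ)) (v : ℕ) :
    rowWith (L.map Prod.fst) (L.map Prod.snd) v = wordAt L v := by
  rw [rowWith, ← List.zip_of_prod rfl rfl, wordAt]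
  rfl

theorem IsReading.typeWord_filling (hE : IsReading I E) (v : ℕ) :
    typeWord I (filling I.length E) v = wordAt (E.map Prod.snd) v := by
  have hblocks : ((List.range I.length).reverse.map OrderDual.toDual).flatMap
      (fun k => (E.filter (·.2.2 = v)).filter (OrderDual.toDual ·.1 = k)) =
        E.filter (·.2.2 = v) := by
    refine flatMap_filter_key_eq ?_ (List.pairwise_filter.2 (hE.ordered.imp ?_)) fun e he => ?_
    · simpa [List.pairwise_map, List.pairwise_reverse] using List.pairwise_lt_range
    · intro e e' h he he'
      have := readKey_le_readKey.1 h
      simp only [decide_eq_true_eq, OrderDual.toDual_le_toDual] at he he' ⊢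
      omega
    · simpa using hE.rowWord.fst_lt_length (List.mem_of_mem_filter he)
  have hrow : ∀ k, wordAt (fiber E k) v =
      ((E.filter (·.2.2 = v)).filter (OrderDual.toDual ·.1 = OrderDual.toDual k)).map (·.2.1) := by
    intro k
    simp [wordAt, fiber, List.filter_map, Function.comp_def, Bool.and_comm]
  calc typeWord I (filling I.length E) v
      = (List.range I.length).reverse.flatMap fun k => wordAt (fiber E k) v := by
        rw [typeWord, hE.rowWord.zip_filling, ← List.map_reverse, List.map_map, List.flatMap_def]
        simp only [Function.comp_def, rowWith_map_fst_map_snd]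
    _ = (E.filter (·.2.2 = v)).map (·.2.1) := by
        rw [← hblocks, List.map_flatMap, List.flatMap_map]
        simp only [hrow]
    _ = wordAt (E.map Prod.snd) v := by
        simp [wordAt, List.filter_map, Function.comp_def]

theorem IsReading.expand_monoOf_filling (hE : IsReading I E) :
    expand (monoOf I (filling I.length E)) = E.map Prod.snd := by
  refine expand_monoOf ?_ ?_ hE.typeWord_filling
  · rw [List.pairwise_map]
    refine hE.ordered.imp fun h => ?_
    grind [readKey_le_readKey]
  · simp only [List.mem_map, forall_exists_index, and_imp, forall_apply_eq_imp_iff₂]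
    exact fun e he => ⟨hE.one_le e he, hE.rowWord.flatten_filling_perm.mem_iff.2
      (List.mem_map_of_mem he)⟩

theorem IsReading.monoOf_filling_eq_iff (hE : IsReading I E) {m : Mono A} (hm : ValidMono m) :
    monoOf I (filling I.length E) = m ↔ E.map Prod.snd = expand m := by
  rw [← hE.expand_monoOf_filling]
  exact (injOn_expand_validMono.eq_iff (validMono_monoOf _ _) hm).symm

theorem bijOn_letters_of_validMono {m : Mono A} (hm : ValidMono m) :
    Set.BijOn letters {E | IsReading I E ∧ E.map Prod.snd = expand m}
      {τ | IsRowWord I τ ∧ Refines m.1 (descentSentence τ)} := by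
  refine ⟨fun E ⟨hE, hs⟩ =>
      ⟨hE.rowWord, refines_descentSentence_of_isReadOrdered hm hE.ordered hs⟩,
    fun E hE E' hE' h => eq_of_letters_eq_of_map_snd_snd_eq h ?_, ?_⟩
  · simpa [Function.comp_def] using congrArg (List.map Prod.snd) (hE.2.trans hE'.2.symm)
  rintro τ ⟨hτ, href⟩
  obtain ⟨E, hordered, rfl, hs⟩ := exists_isReadOrdered_of_refines_descentSentence hm href
  have hone : ∀ e ∈ E, 1 ≤ e.2.2 := fun e he =>
    hm.2.2.1 _ (snd_mem_of_mem_expand (hs ▸ List.mem_map_of_mem he : e.2 ∈ expand m))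
  exact ⟨E, ⟨⟨hordered, hτ, hone⟩, hs⟩, rfl⟩

theorem ncard_filling (hI : IsSentence I) (P : Filling → Prop) :
    {f | IsCIT I f ∧ P f}.ncard = {E | IsReading I E ∧ P (filling I.length E)}.ncard := by
  refine ((bijOn_filling hI).subset_right (r := {f | IsCIT I f ∧ P f}) fun f hf => hf.1).ncard_eq
    |>.symm.trans (congrArg Set.ncard (Set.ext fun E => and_congr_right fun hE => ?_))
  exact and_iff_right (hE.isCIT_filling hI)

theorem dualImm_apply (hI : IsSentence I) {m : Mono A} (hm : ValidMono m) :
    dualImm I m = ({τ | IsRowWord I τ ∧ Refines m.1 (descentSentence τ)}.ncard : ℚ) := by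
  rw [dualImm, ncard_filling hI (monoOf I · = m), ← (bijOn_letters_of_validMono hm).ncard_eq]
  refine congrArg (fun S => (Set.ncard S : ℚ)) (Set.ext fun E => and_congr_right fun hE => ?_)
  exact hE.monoOf_filling_eq_iff hm

theorem dualImm_apply_of_not_validMono {m : Mono A} (hm : ¬ ValidMono m) : dualImm I m = 0 := by
  have : {f | IsCIT I f ∧ monoOf I f = m} = ∅ :=
    Set.eq_empty_of_forall_notMem fun f hf => hm (hf.2 ▸ validMono_monoOf I f)
  rw [dualImm, this, Set.ncard_empty, Nat.cast_zero]

end Fillings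

section Standard

variable {A : Type*} {I : Sentence A} {E : List (ℕ × A × ℕ)}

theorem splitByComp_succ (x : A) (w : List A) (b : ℕ) (bs : List ℕ) {u : List A}
    {us : List (List A)} (h : splitByComp w (b :: bs) = u :: us) :
    splitByComp (x :: w) ((b + 1) :: bs) = (x :: u) :: us := by
  simp only [splitByComp, List.cons.injEq] at h ⊢
  simpa using h

-- The boxes listed by the word are those with entries `c + 1, c + 2, …`, and `r i` is the row of
-- the entry `i`; the induction advances `c`.
theorem splitByComp_descents (r : ℕ → ℕ) (c : ℕ) (x : ℕ × A) (τ : List (ℕ × A))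
    (hr : (x :: τ).map Prod.fst = (List.range' (c + 1) (x :: τ).length).map r) {ds : List ℕ}
    (hds : ds = (List.range' (c + 1) τ.length).filter fun i => decide (r i < r (i + 1))) :
    splitByComp ((x :: τ).map Prod.snd)
      (List.zipWith (fun a b => b - a) (c :: ds) (ds ++ [c + (x :: τ).length])) =
        descentSentence (x :: τ) := by
  induction τ generalizing c x ds with
  | nil =>
    subst hds
    simp [splitByComp, descentSentence_singleton]
  | cons y τ ih =>
    simp only [List.map_cons, List.length_cons, List.range'_succ, List.cons.injEq] at hr
    obtain ⟨hx, hy, hτ⟩ := hr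
    have hlen : c + (x :: y :: τ).length = c + 1 + (y :: τ).length := by simp; omega
    have ih := ih (c + 1) y (by simp [List.range'_succ, hy, hτ]) rfl
    rw [List.length_cons, List.range'_succ, List.filter_cons, ← hx, ← hy] at hds
    rw [hlen, List.map_cons]
    set ds' := (List.range' (c + 1 + 1) τ.length).filter fun i => r i < r (i + 1) with hds'
    by_cases hlt : x.1 < y.1
    · rw [if_pos (by simpa using hlt)] at hds
      rw [descentSentence_cons_cons_of_lt hlt, ← ih, hds]
      simp [splitByComp]
    · rw [if_neg (by simpa using hlt)] at hds
      obtain ⟨w, ws, hw, hws⟩ := descentSentence_cons_cons_of_le (not_lt.1 hlt) τ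
      obtain ⟨d, rest, hd⟩ : ∃ d rest, ds' ++ [c + 1 + (y :: τ).length] = d :: rest :=
        List.exists_cons_of_ne_nil (by simp)
      have hcd : c + 1 ≤ d := by
        have hmem : d ∈ ds' ++ [c + 1 + (y :: τ).length] := hd ▸ List.mem_cons_self
        simp only [hds', List.mem_append, List.mem_filter, List.mem_range'_1,
          List.mem_singleton] at hmem
        omega
      rw [hw, hd, List.zipWith_cons_cons] at ih
      rw [hds, hd, hws, List.zipWith_cons_cons, show d - c = d - (c + 1) + 1 by omega]
      exact splitByComp_succ _ _ _ _ ih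

theorem getD_findIdx_snd {L : List (A × ℕ)} (hL : (L.map Prod.snd).Nodup) {p : A × ℕ}
    (hp : p ∈ L) (d : A) : (L.map Prod.fst).getD ((L.map Prod.snd).findIdx (· == p.2)) d = p.1 := by
  obtain ⟨i, hi, rfl⟩ := List.getElem_of_mem hp
  have := hL.idxOf_getElem i (by simpa using hi)
  rw [List.getElem_map] at this
  rw [← List.idxOf, this]
  simp [hi]

theorem IsRowWord.rowOf_filling (h : IsRowWord I (letters E)) (hE : (E.map (·.2.2)).Nodup)
    {e : ℕ × A × ℕ} (he : e ∈ E) : rowOf (filling I.length E) e.2.2 = e.1 := by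
  have hlt := h.fst_lt_length he
  rw [rowOf, List.findIdx_eq (by rwa [filling_length])]
  simp only [filling, List.getElem_map, List.getElem_range]
  refine ⟨by simpa using ⟨_, he⟩, fun k hk => ?_⟩
  by_contra hcontains
  obtain ⟨a, ha⟩ : ∃ a, (k, a, e.2.2) ∈ E := by simpa using hcontains
  have := List.inj_on_of_nodup_map hE ha he rfl
  grind

theorem IsRowWord.colorOf_filling [Inhabited A] (h : IsRowWord I (letters E))
    (hE : (E.map (·.2.2)).Nodup) {e : ℕ × A × ℕ} (he : e ∈ E) :
    colorOf I (filling I.length E) e.2.2 = e.2.1 := by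
  have hnodup : ((fiber E e.1).map Prod.snd).Nodup := by
    rw [fiber, List.map_map]
    exact hE.sublist (List.filter_sublist.map _)
  rw [colorOf, h.rowOf_filling hE he, ← h.map_fst_fiber, getD_filling (h.fst_lt_length he)]
  exact getD_findIdx_snd hnodup (mem_fiber.2 he) _

theorem IsRowWord.nBoxes_filling (h : IsRowWord I (letters E)) :
    nBoxes (filling I.length E) = E.length := by
  rw [nBoxes, h.flatten_filling_perm.length_eq, List.length_map]

theorem IsReading.isStandardF_filling_iff (hE : IsReading I E) :
    IsStandardF (filling I.length E) ↔ E.map (·.2.2) = List.range' 1 E.length := by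
  rw [IsStandardF, hE.rowWord.nBoxes_filling, hE.rowWord.flatten_filling_perm.congr_left]
  refine ⟨fun h => h.eq_of_pairwise' (r := (· ≤ ·)) ?_ ?_, fun h => h ▸ List.Perm.refl _⟩
  · rw [List.pairwise_map]
    refine hE.ordered.imp fun h => ?_
    grind [readKey_le_readKey]
  · exact List.pairwise_le_range'

theorem IsReading.coA_filling [Inhabited A] (hE : IsReading I E)
    (hstd : E.map (·.2.2) = List.range' 1 E.length) :
    coA I (filling I.length E) = descentSentence (letters E) := by
  have hnodup : (E.map (·.2.2)).Nodup := hstd ▸ List.nodup_range'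
  have hrow : (letters E).map Prod.fst =
      (List.range' 1 (letters E).length).map (rowOf (filling I.length E)) := by
    rw [letters, List.length_map, ← hstd, List.map_map, List.map_map]
    exact List.map_congr_left fun e he => (hE.rowWord.rowOf_filling hnodup he).symm
  have hcolor : readWord I (filling I.length E) = (letters E).map Prod.snd := by
    have hrange : List.range' 1 E.length = (List.range E.length).map (· + 1) := by
      simp [List.range'_eq_map_range, Nat.add_comm]
    rw [readWord, hE.rowWord.nBoxes_filling, ← Function.comp_def (colorOf _ _), ← List.map_map,
      ← hrange, ← hstd, letters, List.map_map, List.map_map]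
    exact List.map_congr_left fun e he => hE.rowWord.colorOf_filling hnodup he
  rw [coA, hcolor, hE.rowWord.nBoxes_filling, descList, compOf, hE.rowWord.nBoxes_filling]
  rcases E with _ | ⟨e, E⟩
  · rfl
  · rw [if_neg (by simp)]
    have := splitByComp_descents _ 0 _ _ hrow (by rw [List.length_map])
    simpa [letters] using this

theorem bijOn_letters_of_standard (I K : Sentence A) :
    Set.BijOn letters
      {E | IsReading I E ∧ E.map (·.2.2) = List.range' 1 E.length ∧ descentSentence (letters E) = K}
      {τ | IsRowWord I τ ∧ descentSentence τ = K} := by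
  refine ⟨fun E hE => ⟨hE.1.rowWord, hE.2.2⟩, fun E hE E' hE' h => ?_, ?_⟩
  · have hlen : E.length = E'.length := by simpa [letters] using congrArg List.length h
    exact eq_of_letters_eq_of_map_snd_snd_eq h (by rw [hE.2.1, hE'.2.1, hlen])
  · rintro τ ⟨hτ, rfl⟩
    set E := List.zipWith (fun p v => (p.1, p.2, v)) τ (List.range' 1 τ.length)
    have hletters : letters E = τ := by
      refine List.ext_getElem (by simp [letters, E]) fun i hi _ => ?_
      simp [letters, E]
    have hvalues : E.map (·.2.2) = List.range' 1 E.length := by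
      refine List.ext_getElem (by simp) fun i hi _ => ?_
      simp [E]
    have hordered : IsReadOrdered E := by
      have hlt : (E.map (·.2.2)).Pairwise (· < ·) := hvalues ▸ List.pairwise_lt_range'
      exact (List.pairwise_map.1 hlt).imp fun h => readKey_le_readKey.2 (Or.inl h)
    have hone : ∀ e ∈ E, 1 ≤ e.2.2 := fun e he => by
      have := hvalues ▸ List.mem_map_of_mem (f := fun e : ℕ × A × ℕ => e.2.2) he
      exact (List.mem_range'_1.1 this).1
    exact ⟨E, ⟨⟨hordered, hletters.symm ▸ hτ, hone⟩, hvalues, by rw [hletters]⟩, hletters⟩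

theorem LJC_eq_ncard_rowWord [Inhabited A] (hI : IsSentence I) (K : Sentence A) :
    LJC I K = {τ | IsRowWord I τ ∧ descentSentence τ = K}.ncard := by
  rw [LJC, ncard_filling hI fun f => IsStandardF f ∧ coA I f = K,
    ← (bijOn_letters_of_standard I K).ncard_eq]
  refine congrArg Set.ncard (Set.ext fun E => and_congr_right fun hE => ?_)
  rw [hE.isStandardF_filling_iff]
  exact and_congr_right fun hstd => by rw [hE.coA_filling hstd]

end Standard

section Fundamental

variable {A : Type*} {I : Sentence A}

theorem finite_setOf_isSentence_flatten_eq (w : List A) :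
    {J : Sentence A | IsSentence J ∧ J.flatten = w}.Finite := by
  refine (Set.finite_range fun c : Composition w.length => w.splitWrtComposition c).subset ?_
  rintro J ⟨hJ, rfl⟩
  refine ⟨⟨J.map List.length, fun hi => ?_, List.length_flatten.symm⟩,
    List.splitWrtComposition_flatten _ _ rfl⟩
  obtain ⟨w, hw, rfl⟩ := List.mem_map.1 hi
  exact List.length_pos_of_ne_nil (hJ w hw)

theorem support_MQ_subset : Function.support (MQ (A := A)) ⊆ {J | IsSentence J} := by
  intro J hJ
  obtain ⟨m, hm⟩ := Function.ne_iff.1 hJ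
  obtain ⟨rfl, hvalid⟩ : m.1 = J ∧ ValidMono m := by simpa [MQ] using hm
  exact hvalid.2.2.2

open Classical in
theorem FQ_apply (I : Sentence A) (m : Mono A) :
    FQ I m = if ValidMono m ∧ Refines m.1 I then 1 else 0 := by
  have hfin : ({J | Refines J I} ∩ Function.support MQ).Finite :=
    (finite_setOf_isSentence_flatten_eq I.flatten).subset fun J hJ =>
      ⟨support_MQ_subset hJ.2, hJ.1.flatten_eq⟩
  have heval : FQ I m = ∑ᶠ J ∈ {J | Refines J I}, MQ J m :=
    (Pi.evalAddMonoidHom (fun _ : Mono A => ℚ) m).map_finsum_mem' hfin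
  rw [heval, finsum_eq_single _ m.1]
  · by_cases href : Refines m.1 I <;> simp [href, MQ]
  · intro J hJ
    simp [MQ, hJ.symm]

theorem finite_setOf_isRowWord (I : Sentence A) : {τ | IsRowWord I τ}.Finite := by
  refine (List.finite_toSet (tagFrom 0 I).permutations).subset fun τ hτ => ?_
  exact List.mem_permutations.2 (perm_of_fiber_eq fun k => by rw [hτ.1, fiber_tagFrom_zero])

theorem dualImm_eq_sum_FQ (hI : IsSentence I) :
    dualImm I = ∑ τ ∈ (finite_setOf_isRowWord I).toFinset, FQ (descentSentence τ) := by
  classical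
  ext m
  simp only [Finset.sum_apply, FQ_apply]
  by_cases hm : ValidMono m
  · simp only [dualImm_apply hI hm, hm, true_and, Finset.sum_boole]
    rw [← Set.ncard_coe_finset, Finset.coe_filter]
    simp only [Set.Finite.mem_toFinset, Set.mem_ofPred_eq]
  · simp [dualImm_apply_of_not_validMono hm, hm]

theorem LJC_eq_card [Inhabited A] [DecidableEq (Sentence A)] (hI : IsSentence I) (K : Sentence A) :
    LJC I K = ((finite_setOf_isRowWord I).toFinset.filter (descentSentence · = K)).card := by
  rw [LJC_eq_ncard_rowWord hI, ← Set.ncard_coe_finset, Finset.coe_filter]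
  simp only [Set.Finite.mem_toFinset, Set.mem_ofPred_eq]

end Fundamental

section Triangularity

variable {A : Type*} {I J : Sentence A} {τ : List (ℕ × A)}

-- Row `k + 1` is entered only after row `k`, hence past a further descent, so the row of a box is
-- at most the number of descents before it.
theorem forall₂_le_tagFrom_descentSentence {c : ℕ} {x : ℕ × A} (hx : x.1 ≤ c)
    (hτ : ∀ p k s, τ.map Prod.fst = p ++ (k + 1) :: s → k ∈ p ∨ k ≤ c) :
    List.Forall₂ (· ≤ ·) ((x :: τ).map Prod.fst)
      ((tagFrom c (descentSentence (x :: τ))).map Prod.fst) := by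
  induction τ generalizing c x with
  | nil => simpa [descentSentence_singleton] using hx
  | cons y τ ih =>
    have hy : y.1 ≤ c + 1 := by
      rcases hk : y.1 with _ | k
      · exact Nat.zero_le _
      · simpa using hτ [] k (τ.map Prod.fst) (by simp [hk])
    have htail : ∀ c', c ≤ c' → y.1 ≤ c' →
        ∀ p k s, τ.map Prod.fst = p ++ (k + 1) :: s → k ∈ p ∨ k ≤ c' := by
      intro c' hc hyc p k s hps
      have := hτ (y.1 :: p) k s (by simp [hps])
      grind
    by_cases hlt : x.1 < y.1
    · have := ih hy (htail _ (Nat.le_succ c) hy)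
      rw [descentSentence_cons_cons_of_lt hlt]
      simpa [hx] using this
    · obtain ⟨w, ws, hw, hws⟩ := descentSentence_cons_cons_of_le (not_lt.1 hlt) τ
      have hyc : y.1 ≤ c := (not_lt.1 hlt).trans hx
      have := ih hyc (htail _ le_rfl hyc)
      rw [hw] at this
      rw [hws]
      simpa [hx] using this

theorem IsGrowthWord.forall₂_le_tagFrom (hτ : IsGrowthWord (τ.map Prod.fst)) :
    List.Forall₂ (· ≤ ·) (τ.map Prod.fst) ((tagFrom 0 (descentSentence τ)).map Prod.fst) := by
  rcases τ with _ | ⟨x, τ⟩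
  · simp
  · have hx : x.1 = 0 := by
      rcases hk : x.1 with _ | k
      · rfl
      · simpa using hτ [] k (τ.map Prod.fst) (by simp [hk])
    refine forall₂_le_tagFrom_descentSentence hx.le fun p k s hps => ?_
    have := hτ (x.1 :: p) k s (by simp [hps])
    grind

theorem eq_of_forall₂_le_of_sum_eq {M : Type*} [AddCommMonoid M] [PartialOrder M]
    [IsOrderedCancelAddMonoid M] {l l' : List M} (h : List.Forall₂ (· ≤ ·) l l')
    (hsum : l.sum = l'.sum) : l = l' := by
  induction h with
  | nil => rfl
  | cons hle hrest ih =>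
    rw [List.sum_cons, List.sum_cons, add_eq_add_iff_eq_and_eq hle hrest.sum_le_sum] at hsum
    rw [hsum.1, ih hsum.2]

/-- The sum over all letters of a sentence of the index of the word containing it, which
strictly increases along the edges of the colored immaculate descent graph. -/
def weight (I : Sentence A) : ℕ :=
  ((tagFrom 0 I).map Prod.fst).sum

theorem IsRowWord.perm_tagFrom (h : IsRowWord I τ) : τ.Perm (tagFrom 0 I) :=
  perm_of_fiber_eq fun k => by rw [h.1, fiber_tagFrom_zero]

theorem IsRowWord.weight_le (h : IsRowWord I τ) : weight I ≤ weight (descentSentence τ) := by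
  rw [weight, ← (h.perm_tagFrom.map Prod.fst).sum_eq]
  exact h.2.forall₂_le_tagFrom.sum_le_sum

theorem IsRowWord.eq_tagFrom_of_weight_eq (h : IsRowWord I τ)
    (heq : weight (descentSentence τ) = weight I) : τ = tagFrom 0 I := by
  have hrows : τ.map Prod.fst = (tagFrom 0 (descentSentence τ)).map Prod.fst := by
    refine eq_of_forall₂_le_of_sum_eq h.2.forall₂_le_tagFrom ?_
    rw [(h.perm_tagFrom.map Prod.fst).sum_eq]
    exact heq.symm
  have hsorted : τ.Pairwise (·.1 ≤ ·.1) := by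
    rw [← List.pairwise_map (R := (· ≤ ·)), hrows, List.pairwise_map]
    exact pairwise_tagFrom _ _
  refine eq_of_pairwise_key_le hsorted (pairwise_tagFrom _ _) fun k => ?_
  rw [filter_fst_eq_map_fiber, filter_fst_eq_map_fiber, h.1, fiber_tagFrom_zero]

theorem weight_le_sq (hI : IsSentence I) : weight I ≤ I.flatten.length ^ 2 := by
  have hlen : I.length ≤ I.flatten.length := by
    rw [List.length_flatten, ← List.length_map (f := List.length)]
    refine List.length_le_sum_of_one_le _ fun i hi => ?_
    obtain ⟨w, hw, rfl⟩ := List.mem_map.1 hi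
    exact List.length_pos_of_ne_nil (hI w hw)
  have hsum := List.sum_le_card_nsmul ((tagFrom 0 I).map Prod.fst) I.length fun i hi => by
    obtain ⟨e, he, rfl⟩ := List.mem_map.1 hi
    exact (fst_lt_length_of_mem_tagFrom he).le
  rw [List.length_map, ← List.length_map (f := Prod.snd), map_snd_tagFrom, smul_eq_mul] at hsum
  exact hsum.trans (by rw [sq]; exact Nat.mul_le_mul_left _ hlen)

theorem isRowWord_tagFrom (hI : IsSentence I) : IsRowWord I (tagFrom 0 I) := by
  refine ⟨fiber_tagFrom_zero I, fun p k s hps => ?_⟩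
  obtain ⟨e, he, hek⟩ : ∃ e ∈ tagFrom 0 I, e.1 = k + 1 := by
    simpa using (hps ▸ by simp : k + 1 ∈ (tagFrom 0 I).map Prod.fst)
  have hk : k < I.length := by
    have := fst_lt_length_of_mem_tagFrom he
    omega
  obtain ⟨a, ha⟩ := List.exists_mem_of_ne_nil _ ((getD_ne_nil_iff hI).2 hk)
  have hmem : k ∈ p ++ (k + 1) :: s :=
    hps ▸ List.mem_map_of_mem (mem_fiber.1 (fiber_tagFrom_zero I k ▸ ha))
  have hsorted : (p ++ (k + 1) :: s).Pairwise (· ≤ ·) :=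
    hps ▸ List.pairwise_map.2 (pairwise_tagFrom 0 I)
  rw [List.pairwise_append, List.pairwise_cons] at hsorted
  grind

theorem LJC_self [Inhabited A] (hI : IsSentence I) : LJC I I = 1 := by
  rw [LJC_eq_ncard_rowWord hI, Set.ncard_eq_one]
  refine ⟨tagFrom 0 I, Set.eq_singleton_iff_unique_mem.2
    ⟨⟨isRowWord_tagFrom hI, descentSentence_tagFrom hI 0⟩, fun τ hτ => ?_⟩⟩
  exact hτ.1.eq_tagFrom_of_weight_eq (by rw [hτ.2])

variable [Inhabited A]

theorem IsEdge.exists_rowWord (hI : IsSentence I) (h : IsEdge I J) :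
    ∃ τ, IsRowWord I τ ∧ descentSentence τ = J := by
  have := h.2
  rw [LJC_eq_ncard_rowWord hI] at this
  exact Set.nonempty_of_ncard_ne_zero this

theorem IsEdge.isSentence (hI : IsSentence I) (h : IsEdge I J) : IsSentence J := by
  obtain ⟨τ, -, rfl⟩ := h.exists_rowWord hI
  exact isSentence_descentSentence τ

theorem IsEdge.length_flatten (hI : IsSentence I) (h : IsEdge I J) :
    J.flatten.length = I.flatten.length := by
  obtain ⟨τ, hτ, rfl⟩ := h.exists_rowWord hI
  rw [flatten_descentSentence, List.length_map, hτ.perm_tagFrom.length_eq, ← map_snd_tagFrom 0 I,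
    List.length_map]

theorem IsEdge.weight_lt (hI : IsSentence I) (h : IsEdge I J) : weight I < weight J := by
  obtain ⟨τ, hτ, rfl⟩ := h.exists_rowWord hI
  refine hτ.weight_le.lt_of_ne fun heq => h.1 ?_
  rw [hτ.eq_tagFrom_of_weight_eq heq.symm, descentSentence_tagFrom hI]

theorem acc_isEdge (hI : IsSentence I) : Acc (fun J K => IsEdge K J) I := by
  induction hn : I.flatten.length ^ 2 - weight I using Nat.strong_induction_on generalizing I with
  | h n ih =>
    refine Acc.intro _ fun J hJ => ih _ ?_ (hJ.isSentence hI) rfl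
    have hlt := hJ.weight_lt hI
    have hle := weight_le_sq (hJ.isSentence hI)
    rw [hJ.length_flatten hI] at hle ⊢
    omega

end Triangularity

section Paths

variable {V R M : Type*} {E : V → V → Prop} {S : Set V}

/-- The directed paths from `x`, as the nonempty lists of their successive vertices. -/
def pathsFrom (E : V → V → Prop) (x : V) : Set (List V) :=
  {p | p.head? = some x ∧ p.IsChain E}

/-- The directed paths from `x` to `y`. -/
def pathsBetween (E : V → V → Prop) (x y : V) : Set (List V) :=
  {p | p.head? = some x ∧ p.getLast? = some y ∧ p.IsChain E}

/-- The product of the edge weights of a path, with the sign given by its number of edges. -/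
def signedWeight [CommRing R] (L : V → V → R) (p : List V) : R :=
  (-1) ^ (p.length - 1) * ((p.zip p.tail).map fun e => L e.1 e.2).prod

theorem signedWeight_singleton [CommRing R] (L : V → V → R) (x : V) : signedWeight L [x] = 1 := by
  simp [signedWeight]

theorem signedWeight_cons [CommRing R] (L : V → V → R) (x : V) {y : V} {p : List V}
    (hp : p ∈ pathsFrom E y) : signedWeight L (x :: p) = -(L x y * signedWeight L p) := by
  obtain ⟨p, rfl⟩ := List.head?_eq_some_iff.1 hp.1
  simp [signedWeight, pow_succ]
  ring

theorem pathsFrom_eq (x : V) : pathsFrom E x =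
    insert [x] (⋃ y ∈ {y | E x y}, (x :: ·) '' pathsFrom E y) := by
  ext p
  simp only [Set.mem_insert_iff, Set.mem_iUnion, exists_prop]
  constructor
  · rintro ⟨hhead, hchain⟩
    obtain ⟨p, rfl⟩ := List.head?_eq_some_iff.1 hhead
    rcases p with _ | ⟨y, p⟩
    · exact Or.inl rfl
    · rw [List.isChain_cons_cons] at hchain
      exact Or.inr ⟨y, hchain.1, y :: p, ⟨rfl, hchain.2⟩, rfl⟩
  · rintro (rfl | ⟨y, hxy, p, ⟨hhead, hchain⟩, rfl⟩)
    · exact ⟨rfl, List.isChain_singleton x⟩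
    · obtain ⟨p, rfl⟩ := List.head?_eq_some_iff.1 hhead
      exact ⟨rfl, List.isChain_cons_cons.2 ⟨hxy, hchain⟩⟩

theorem finite_pathsFrom (hS : ∀ x ∈ S, ∀ y, E x y → y ∈ S) (hfin : ∀ x ∈ S, {y | E x y}.Finite)
    {x : V} (hx : x ∈ S) (hacc : Acc (fun y x => E x y) x) : (pathsFrom E x).Finite := by
  induction hacc with
  | intro x _ ih =>
    rw [pathsFrom_eq]
    exact ((hfin x hx).biUnion fun y hy => (ih y hy (hS x hx y hy)).image _).insert _

theorem finsum_mem_pathsFrom [AddCommMonoid M] {x : V} (hfin : {y | E x y}.Finite)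
    (hpaths : ∀ y, E x y → (pathsFrom E y).Finite) (g : List V → M) :
    ∑ᶠ p ∈ pathsFrom E x, g p = g [x] + ∑ᶠ y ∈ {y | E x y}, ∑ᶠ p ∈ pathsFrom E y, g (x :: p) := by
  have hdisj : {y | E x y}.PairwiseDisjoint fun y => (x :: ·) '' pathsFrom E y := by
    intro y _ z _ hyz
    refine Set.disjoint_left.2 ?_
    rintro _ ⟨p, hp, rfl⟩ ⟨q, hq, hqp⟩
    obtain rfl := List.tail_eq_of_cons_eq hqp
    exact hyz (Option.some_injective _ (hp.1.symm.trans hq.1))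
  have hnotMem : [x] ∉ ⋃ y ∈ {y | E x y}, (x :: ·) '' pathsFrom E y := by
    simp only [Set.mem_iUnion, not_exists]
    rintro y - ⟨p, hp, hpx⟩
    obtain rfl : p = [] := List.tail_eq_of_cons_eq hpx
    simp [pathsFrom] at hp
  rw [pathsFrom_eq, finsum_mem_insert _ hnotMem (hfin.biUnion fun y hy => (hpaths y hy).image _),
    finsum_mem_biUnion hdisj hfin fun y hy => (hpaths y hy).image _]
  simp only [finsum_mem_image (List.cons_injective).injOn]

variable [CommRing R] [AddCommGroup M] [Module R M]

theorem eq_finsum_pathsFrom (hS : ∀ x ∈ S, ∀ y, E x y → y ∈ S)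
    (hfin : ∀ x ∈ S, {y | E x y}.Finite) (L : V → V → R) (F D : V → M)
    (hD : ∀ x ∈ S, D x = F x + ∑ᶠ y ∈ {y | E x y}, L x y • F y) {x : V} (hx : x ∈ S)
    (hacc : Acc (fun y x => E x y) x) :
    F x = ∑ᶠ p ∈ pathsFrom E x, signedWeight L p • D (p.getLastD x) := by
  induction hacc with
  | intro x hx' ih =>
    have hpaths : ∀ y, E x y → (pathsFrom E y).Finite := fun y hy =>
      finite_pathsFrom hS hfin (hS x hx y hy) (hx' y hy)
    have hstep : ∀ y ∈ {y | E x y}, ∑ᶠ p ∈ pathsFrom E y,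
        signedWeight L (x :: p) • D ((x :: p).getLastD x) = -(L x y • F y) := by
      intro y hy
      rw [ih y hy (hS x hx y hy), smul_finsum_mem (hpaths y hy),
        ← finsum_mem_neg_distrib _ (hpaths y hy)]
      refine finsum_mem_congr rfl fun p hp => ?_
      obtain ⟨q, rfl⟩ := List.head?_eq_some_iff.1 hp.1
      rw [signedWeight_cons L x hp, neg_smul, mul_smul, List.getLastD_cons, List.getLastD_cons,
        List.getLastD_cons]
    rw [finsum_mem_pathsFrom (hfin x hx) hpaths, finsum_mem_congr rfl hstep,
      finsum_mem_neg_distrib _ (hfin x hx), signedWeight_singleton, one_smul]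
    exact eq_add_neg_of_add_eq (hD x hx).symm

theorem finsum_mem_smul_comp {ι κ : Type*} {s : Set ι} (hs : s.Finite) (f : ι → R) (g : ι → κ)
    (D : κ → M) : ∑ᶠ i ∈ s, f i • D (g i) =
      ∑ᶠ k ∈ g '' s, (∑ᶠ i ∈ {i ∈ s | g i = k}, f i) • D k := by
  have hdisj : (g '' s).PairwiseDisjoint fun k => {i ∈ s | g i = k} := fun k _ l _ hkl =>
    Set.disjoint_left.2 fun i hi hi' => hkl (hi.2.symm.trans hi'.2)
  have hunion : ⋃ k ∈ g '' s, {i ∈ s | g i = k} = s := by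
    ext i
    simp only [Set.mem_iUnion, Set.mem_ofPred_eq, exists_prop]
    exact ⟨fun ⟨_, _, hi, _⟩ => hi, fun hi => ⟨g i, Set.mem_image_of_mem g hi, hi, rfl⟩⟩
  have hfiber : ∀ k, {i ∈ s | g i = k}.Finite := fun k => hs.subset fun i hi => hi.1
  rw [← finsum_mem_congr hunion fun _ _ => rfl,
    finsum_mem_biUnion hdisj (hs.image g) fun k _ => hfiber k]
  refine finsum_mem_congr rfl fun k _ => ?_
  rw [← smulAddHom_apply, ← AddMonoidHom.flip_apply, AddMonoidHom.map_finsum_mem _ _ (hfiber k)]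
  exact finsum_mem_congr rfl fun i hi => by rw [hi.2]; rfl

theorem eq_finsum_pathsBetween (hS : ∀ x ∈ S, ∀ y, E x y → y ∈ S)
    (hfin : ∀ x ∈ S, {y | E x y}.Finite) (L : V → V → R) (F D : V → M)
    (hD : ∀ x ∈ S, D x = F x + ∑ᶠ y ∈ {y | E x y}, L x y • F y) {x : V} (hx : x ∈ S)
    (hacc : Acc (fun y x => E x y) x) :
    F x = ∑ᶠ z ∈ {z | (pathsBetween E x z).Nonempty},
      (∑ᶠ p ∈ pathsBetween E x z, signedWeight L p) • D z := by
  have hbetween : ∀ z, pathsBetween E x z = {p ∈ pathsFrom E x | p.getLastD x = z} := by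
    intro z
    ext p
    rcases p with _ | ⟨y, p⟩
    · simp [pathsBetween, pathsFrom]
    · simp [pathsBetween, pathsFrom, List.getLast?_cons, List.getLastD_eq_getLast?, and_assoc,
        and_comm]
  have himage : {z | (pathsBetween E x z).Nonempty} = (·.getLastD x) '' pathsFrom E x := by
    ext z
    rw [Set.mem_ofPred_eq, hbetween]
    rfl
  rw [eq_finsum_pathsFrom hS hfin L F D hD hx hacc,
    finsum_mem_smul_comp (finite_pathsFrom hS hfin hx hacc), himage]
  simp only [hbetween]

end Paths

section Expansion

variable {A : Type*} [Inhabited A] {I : Sentence A}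

theorem finite_setOf_isEdge (hI : IsSentence I) : {J | IsEdge I J}.Finite :=
  ((finite_setOf_isRowWord I).image descentSentence).subset fun _ hJ => hJ.exists_rowWord hI

theorem LJC_ne_zero_iff (hI : IsSentence I) {K : Sentence A} :
    LJC I K ≠ 0 ↔ K = I ∨ IsEdge I K := by
  by_cases hK : K = I
  · simp [hK, LJC_self hI]
  · simp [hK, IsEdge]

theorem dualImm_eq_FQ_add_finsum_isEdge (hI : IsSentence I) :
    dualImm I = FQ I + ∑ᶠ K ∈ {K | IsEdge I K}, (LJC I K : ℚ) • FQ K := by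
  classical
  have himage : (finite_setOf_isRowWord I).toFinset.image descentSentence =
      insert I (finite_setOf_isEdge hI).toFinset := by
    ext K
    rw [Finset.mem_insert, Set.Finite.mem_toFinset, Set.mem_ofPred_eq, ← LJC_ne_zero_iff hI,
      LJC_eq_card hI, Finset.card_ne_zero, Finset.filter_nonempty_iff, Finset.mem_image]
  have hnotMem : I ∉ (finite_setOf_isEdge hI).toFinset := fun h =>
    ((Set.Finite.mem_toFinset _).1 h).1 rfl
  rw [dualImm_eq_sum_FQ hI, Finset.sum_comp FQ descentSentence, himage]
  simp only [← LJC_eq_card hI, ← Nat.cast_smul_eq_nsmul ℚ]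
  rw [Finset.sum_insert hnotMem, LJC_self hI, Nat.cast_one, one_smul,
    finsum_mem_eq_finite_toFinset_sum _ (finite_setOf_isEdge hI)]

end Expansion

/-- For a sentence `I`, the colored fundamental function expands into the
colored dual immaculate basis as `F_I = Σ_K L⁻¹_{I,K} 𝔖*_K`, summed over all sentences `K`
reachable from `I` in the colored immaculate descent graph, where
`L⁻¹_{I,K} = Σ_𝒫 (-1)^{ℓ(𝒫)} prod(𝒫)` over directed paths `𝒫` from `I` to `K`. -/
theorem statement7 {A : Type*} [Inhabited A] (I : Sentence A) (hI : IsSentence I) :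
    FQ I = ∑ᶠ K ∈ {K : Sentence A | (PathsFromTo I K).Nonempty}, Linv I K • dualImm K := by
  have hclosed : ∀ J ∈ {J : Sentence A | IsSentence J}, ∀ K, IsEdge J K → IsSentence K :=
    fun _ hJ _ h => h.isSentence hJ
  have hfinite : ∀ J ∈ {J : Sentence A | IsSentence J}, {K | IsEdge J K}.Finite :=
    fun _ hJ => finite_setOf_isEdge hJ
  have hexpand : ∀ J ∈ {J : Sentence A | IsSentence J},
      dualImm J = FQ J + ∑ᶠ K ∈ {K | IsEdge J K}, (LJC J K : ℚ) • FQ K :=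
    fun _ hJ => dualImm_eq_FQ_add_finsum_isEdge hJ
  exact eq_finsum_pathsBetween hclosed hfinite (fun J K => (LJC J K : ℚ)) FQ dualImm hexpand hI
    (acc_isEdge hI)

end ColoredImm
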